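/- arXiv:math/0601362 — 4 statements merged into one kernel-verified Lean document; each statement's English description precedes it below -/
import Mathlib

section
/- (ABC Lemma) Let A, B, C be pairwise coprime polynomials in ℂ[z_{1,1},...,z_{n,m}], each nonvanishing on the configuration space ℰⁿ(ℂ^m,gp) ⊂ ℂ^{mn}, at least one of them nonconstant, and satisfying A + B + C = 0. Then there exist distinct indices i_1,...,i_{m-1},j,k,l,s in {1,...,n} and α ∈ ℂ \ {0} such that, with 𝐢 = (i_1,...,i_{m-1}), A = α·d_{𝐢,j,k}·d_{𝐢,l,s}, B = α·d_{𝐢,j,l}·d_{𝐢,s,k}, and C = α·d_{𝐢,j,s}·d_{𝐢,k,l}. -/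
/-- The determinant polynomial `d_{a_1,...,a_{m+1}}` in the variables `z_{i,j}`:
the determinant of the `(m+1)×(m+1)` matrix whose `r`-th row is
`(z_{a_r,1}, ..., z_{a_r,m}, 1)`. -/
noncomputable def dpoly {n m : ℕ} (a : Fin (m + 1) → Fin n) :
    MvPolynomial (Fin n × Fin m) ℂ :=
  (Matrix.of (fun r c : Fin (m + 1) =>
    (Fin.snoc (fun j : Fin m => MvPolynomial.X (a r, j)) 1 :
      Fin (m + 1) → MvPolynomial (Fin n × Fin m) ℂ) c)).det

/-- The affine determinant `d_{a_1,...,a_{m+1}}(q)` for points `q_i ∈ ℂ^m`. -/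
noncomputable def dA {n m : ℕ} (q : Fin n → Fin m → ℂ) (a : Fin (m + 1) → Fin n) : ℂ :=
  (Matrix.of (fun r c : Fin (m + 1) => Fin.snoc (q (a r)) (1 : ℂ) c)).det

/-- `q ∈ ℰⁿ(ℂ^m, gp)`: no `m+1` of the points lie on an affine hyperplane. -/
def GenPos {n m : ℕ} (q : Fin n → Fin m → ℂ) : Prop :=
  ∀ a : Fin (m + 1) → Fin n, Function.Injective a → dA q a ≠ 0

open MvPolynomial in
noncomputable def gdet {n m k : ℕ} (a : Fin (k + 1) → Fin n) (c : Fin k → Fin m) :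
    MvPolynomial (Fin n × Fin m) ℂ :=
  (Matrix.of (fun r j : Fin (k + 1) =>
    (Fin.snoc (fun j : Fin k => MvPolynomial.X (a r, c j)) 1 :
      Fin (k + 1) → MvPolynomial (Fin n × Fin m) ℂ) j)).det

lemma dpoly_eq_gdet {n m : ℕ} (a : Fin (m + 1) → Fin n) : dpoly a = gdet a (id : Fin m → Fin m) := rfl

lemma eval_gdet {n m k : ℕ} (a : Fin (k + 1) → Fin n) (c : Fin k → Fin m) (p : Fin n × Fin m → ℂ) :
    MvPolynomial.eval p (gdet a c) =
    (Matrix.of (fun r j : Fin (k + 1) =>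
    (Fin.snoc (fun j : Fin k => p (a r, c j)) 1 : Fin (k + 1) → ℂ) j)).det := by
  unfold gdet
  rw [RingHom.map_det]
  congr 1
  ext r j
  refine Fin.lastCases ?_ (fun j => ?_) j <;> simp

lemma eval_dpoly {n m : ℕ} (a : Fin (m + 1) → Fin n) (p : Fin n × Fin m → ℂ) :
    MvPolynomial.eval p (dpoly a) = dA (fun i j => p (i, j)) a := by
  rw [dpoly_eq_gdet, eval_gdet]; rfl

lemma simplex_det {k : ℕ} (σ : Equiv.Perm (Fin (k + 1))) :
    (Matrix.of (fun r j : Fin (k + 1) =>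
    (Fin.snoc (fun j : Fin k => if r = σ j.castSucc then 1 else 0) 1 : Fin (k + 1) → ℂ) j)).det ≠ 0 := by
  set N := (Matrix.of (fun r j : Fin (k + 1) =>
    (Fin.snoc (fun j : Fin k => if r = σ j.castSucc then 1 else 0) 1 : Fin (k + 1) → ℂ) j)) with hN
  have h1 : (N.submatrix σ id).det = 1 := by
    rw [Matrix.det_of_isUpperTriangular]
    · apply Finset.prod_eq_one
      intro i _
      refine Fin.lastCases ?_ (fun j => ?_) i <;> simp [hN]
    · intro i j hij
      revert hij
      refine Fin.lastCases ?_ (fun j => ?_) j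
      · intro h
        exact absurd h (not_lt.mpr (Fin.le_last _))
      · intro h
        have : i ≠ j.castSucc := ne_of_gt h
        simp [hN, this]
  rw [Matrix.det_permute] at h1
  intro h
  rw [h] at h1
  simp at h1

lemma gdet_succ {n m k : ℕ} (a : Fin (k + 2) → Fin n) (c : Fin (k + 1) → Fin m) :
    gdet a c = gdet (a ∘ Fin.succ) (c ∘ Fin.succ) * MvPolynomial.X (a 0, c 0) +
      ∑ i : Fin (k + 1), (-1) ^ ((i : ℕ) + 1) * MvPolynomial.X (a i.succ, c 0) *
        gdet (a ∘ i.succ.succAbove) (c ∘ Fin.succ) := by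
  have key : ∀ i : Fin (k + 2), ((Matrix.of (fun r j : Fin (k + 2) =>
    (Fin.snoc (fun j : Fin (k + 1) => MvPolynomial.X (a r, c j)) 1 :
      Fin (k + 2) → MvPolynomial (Fin n × Fin m) ℂ) j)).submatrix i.succAbove Fin.succ).det
      = gdet (a ∘ i.succAbove) (c ∘ Fin.succ) := by
    intro i
    unfold gdet
    congr 1
    ext1 r j
    refine Fin.lastCases ?_ (fun j => ?_) j
    · simp
    · simp only [Matrix.submatrix_apply, Matrix.of_apply, Fin.succ_castSucc, Fin.snoc_castSucc]
      rfl
  have h0 : ∀ r : Fin (k + 2), (Matrix.of (fun r j : Fin (k + 2) =>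
    (Fin.snoc (fun j : Fin (k + 1) => MvPolynomial.X (a r, c j)) 1 :
      Fin (k + 2) → MvPolynomial (Fin n × Fin m) ℂ) j)) r 0 = MvPolynomial.X (a r, c 0) := by
    intro r
    have : (0 : Fin (k + 2)) = Fin.castSucc 0 := rfl
    rw [this, Matrix.of_apply, Fin.snoc_castSucc]
  conv_lhs => unfold gdet
  rw [Matrix.det_succ_column_zero, Fin.sum_univ_succ]
  simp only [key, h0]
  simp only [Fin.val_zero, pow_zero, one_mul, Fin.succAbove_zero, Fin.val_succ]
  rw [mul_comm (MvPolynomial.X (a 0, c 0))]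

lemma gdet_mem {n m k : ℕ} (a : Fin (k + 1) → Fin n) (c : Fin k → Fin m) (s : Set (Fin n × Fin m))
    (h : ∀ r j, (a r, c j) ∈ s) : gdet a c ∈ MvPolynomial.supported ℂ s := by
  unfold gdet
  rw [Matrix.det_apply]
  refine Subalgebra.sum_mem _ fun σ _ => ?_
  rw [Units.smul_def, zsmul_eq_mul]
  refine Subalgebra.mul_mem _ (Subalgebra.intCast_mem _ _) (Subalgebra.prod_mem _ fun j _ => ?_)
  refine Fin.lastCases ?_ (fun j => ?_) j
  · simp
  · simpa [MvPolynomial.X_mem_supported] using h _ _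

open Classical in
lemma eval_gdet_simplex {n m k : ℕ} (a : Fin (k + 1) → Fin n) (c : Fin k → Fin m)
    (ha : Function.Injective a) (hc : Function.Injective c) (σ : Equiv.Perm (Fin (k + 1))) :
    MvPolynomial.eval (fun v => if ∃ j, v = (a (σ (Fin.castSucc j)), c j) then 1 else 0)
      (gdet a c) ≠ 0 := by
  rw [eval_gdet]
  convert simplex_det σ using 6 with r j j'
  simp [ha.eq_iff, hc.eq_iff]

open Classical in
lemma gdet_irred {n m k : ℕ} (a : Fin (k + 2) → Fin n) (c : Fin (k + 1) → Fin m)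
    (ha : Function.Injective a) (hc : Function.Injective c) : Irreducible (gdet a c) := by
  induction k with
  | zero =>
    rw [gdet_succ]
    have h1 : gdet (a ∘ Fin.succ) (c ∘ Fin.succ) = 1 := by
      simp [gdet, Fin.snoc]
    apply MvPolynomial.irreducible_mul_X_add
    · rw [h1]; exact one_ne_zero
    · rw [h1]; simp
    · intro h
      have : (∑ i : Fin (0 + 1), (-1) ^ ((i : ℕ) + 1) * MvPolynomial.X (a i.succ, c 0) *
        gdet (a ∘ i.succ.succAbove) (c ∘ Fin.succ)) ∈ MvPolynomial.supported ℂ {v | v ≠ (a 0, c 0)} := by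
        refine Subalgebra.sum_mem _ fun i _ => Subalgebra.mul_mem _ (Subalgebra.mul_mem _ ?_ ?_) ?_
        · exact Subalgebra.pow_mem _ (Subalgebra.neg_mem _ (Subalgebra.one_mem _)) _
        · rw [MvPolynomial.X_mem_supported]; simp [ha.eq_iff]
        · apply gdet_mem
          intro r j
          exact j.elim0
      exact (MvPolynomial.mem_supported.mp this h) rfl
    · rw [h1]; exact isRelPrime_one_left
  | succ k ih =>
    have hf : Irreducible (gdet (a ∘ Fin.succ) (c ∘ Fin.succ)) :=
      ih _ _ (ha.comp (Fin.succ_injective _)) (hc.comp (Fin.succ_injective _))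
    have hg := gdet_succ a c
    have he := eval_gdet_simplex a c ha hc (Equiv.swap 0 1)
    rw [hg] at he ⊢
    apply MvPolynomial.irreducible_mul_X_add
    · exact hf.ne_zero
    · intro h
      have : gdet (a ∘ Fin.succ) (c ∘ Fin.succ) ∈ MvPolynomial.supported ℂ {v | v ≠ (a 0, c 0)} := by
        apply gdet_mem
        intro r j
        simp [hc.eq_iff]
      exact (MvPolynomial.mem_supported.mp this h) rfl
    · intro h
      have : (∑ i : Fin (k + 1 + 1), (-1) ^ ((i : ℕ) + 1) * MvPolynomial.X (a i.succ, c 0) *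
        gdet (a ∘ i.succ.succAbove) (c ∘ Fin.succ)) ∈ MvPolynomial.supported ℂ {v | v ≠ (a 0, c 0)} := by
        refine Subalgebra.sum_mem _ fun i _ => Subalgebra.mul_mem _ (Subalgebra.mul_mem _ ?_ ?_) ?_
        · exact Subalgebra.pow_mem _ (Subalgebra.neg_mem _ (Subalgebra.one_mem _)) _
        · rw [MvPolynomial.X_mem_supported]; simp [ha.eq_iff]
        · apply gdet_mem
          intro r j
          simp [hc.eq_iff]
      exact (MvPolynomial.mem_supported.mp this h) rfl
    · rw [hf.isRelPrime_iff_not_dvd]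
      rintro ⟨h, hh⟩
      apply he
      rw [hh, ← mul_add, map_mul, eval_gdet]
      apply mul_eq_zero_of_left
      apply Matrix.det_zero_of_row_eq (i := 0) (j := Fin.last _)
      · exact (Fin.last_pos).ne
      · ext j
        simp only [Matrix.of_apply]
        congr 1
        ext j'
        have e1 : Equiv.swap (0 : Fin (k + 3)) 1 (Fin.castSucc j'.succ) ≠ Fin.succ 0 := by
          intro h
          have := congrArg (Equiv.swap (0 : Fin (k + 3)) 1) h
          rw [Equiv.swap_apply_self] at this
          have h3 : Equiv.swap (0 : Fin (k + 3)) 1 (Fin.succ 0) = 0 := Equiv.swap_apply_right _ _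
          rw [h3] at this
          exact absurd (congrArg Fin.val this) (by simp)
        have e2 : Equiv.swap (0 : Fin (k + 3)) 1 (Fin.castSucc j'.succ) ≠ Fin.succ (Fin.last _) := by
          intro h
          have := congrArg (Equiv.swap (0 : Fin (k + 3)) 1) h
          rw [Equiv.swap_apply_self, Equiv.swap_apply_of_ne_of_ne] at this
          · have h4 := congrArg Fin.val this
            simp only [Fin.val_castSucc, Fin.val_succ, Fin.val_last] at h4
            omega
          · exact Fin.succ_ne_zero _
          · intro h5
            have h4 := congrArg Fin.val h5
            simp at h4
        rw [if_neg, if_neg]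
        · rintro ⟨j, hj⟩
          simp only [Prod.mk.injEq, Function.comp, hc.eq_iff, ha.eq_iff] at hj
          obtain ⟨h1, rfl⟩ := hj
          exact e2 h1.symm
        · rintro ⟨j, hj⟩
          simp only [Prod.mk.injEq, Function.comp, hc.eq_iff, ha.eq_iff] at hj
          obtain ⟨h1, rfl⟩ := hj
          exact e1 h1.symm

lemma dpoly_irred {n M : ℕ} (a : Fin (M + 3) → Fin n) (ha : Function.Injective a) :
    Irreducible (dpoly (m := M + 2) a) := by
  rw [dpoly_eq_gdet]
  exact gdet_irred a id ha Function.injective_id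

open Classical in
lemma family {n M : ℕ} (I J : Finset (Fin n)) :
    ∃ q : Fin n × Fin (M + 2) → ℂ, ∀ a : Fin (M + 3) → Fin n, Function.Injective a →
      (MvPolynomial.eval q (dpoly a) = 0 ↔ ∀ r r', a r ∉ I → a r' ∉ J → r = r') := by
  let w : Fin n × Fin (M + 2) → ℂ := fun v =>
    if (v.2 = 0 ∧ v.1 ∈ I) ∨ (v.2 = 1 ∧ v.1 ∈ J) then 0 else 1
  let φ : MvPolynomial (Fin n × Fin (M + 2)) ℂ →ₐ[ℂ] MvPolynomial (Fin n × Fin (M + 2)) ℂ :=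
    MvPolynomial.aeval (fun v => MvPolynomial.C (w v) * MvPolynomial.X v)
  have hφ : ∀ p P, MvPolynomial.eval p (φ P) = MvPolynomial.eval (fun v => w v * p v) P := by
    intro p P
    have : ((MvPolynomial.eval p).comp (φ : _ →+* _)) = MvPolynomial.eval (fun v => w v * p v) := by
      apply MvPolynomial.ringHom_ext
      · intro r; simp [φ]
      · intro r; simp [φ]
    exact DFunLike.congr_fun this P
  let T : Finset (Fin (M + 3) → Fin n) := Finset.univ.filter fun a => Function.Injective a ∧
    ∃ r r', a r ∉ I ∧ a r' ∉ J ∧ r ≠ r'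
  have hne : ∏ a ∈ T, φ (dpoly a) ≠ 0 := by
    rw [Finset.prod_ne_zero_iff]
    intro a ha hz
    obtain ⟨hinj, r, r', hr, hr', hrr⟩ := (Finset.mem_filter.mp ha).2
    obtain ⟨σ, h0, h1⟩ : ∃ σ : Equiv.Perm (Fin (M + 3)), σ 0 = r ∧ σ 1 = r' := by
      refine ⟨(Equiv.swap (Equiv.swap 0 r 1) r') * Equiv.swap 0 r, ?_, ?_⟩
      · rw [Equiv.Perm.mul_apply, Equiv.swap_apply_left]
        apply Equiv.swap_apply_of_ne_of_ne _ hrr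
        intro h
        have := congrArg (Equiv.swap 0 r) h
        rw [Equiv.swap_apply_self, Equiv.swap_apply_right] at this
        exact absurd this (by simp)
      · rw [Equiv.Perm.mul_apply, Equiv.swap_apply_left]
    have h2 := eval_gdet_simplex a (id : Fin (M + 2) → Fin (M + 2)) hinj Function.injective_id σ
    apply h2
    have h3 := congrArg (MvPolynomial.eval
      (fun v => if ∃ j, v = (a (σ (Fin.castSucc j)), id j) then 1 else 0)) hz
    rw [hφ, map_zero, dpoly_eq_gdet] at h3
    refine Eq.trans ?_ h3
    congr 2
    ext v
    split_ifs with hv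
    · obtain ⟨j, rfl⟩ := hv
      simp only [w, mul_one]
      rw [if_neg]
      rintro (⟨h4, h5⟩ | ⟨h4, h5⟩)
      · simp only [id] at h4
        subst h4
        rw [Fin.castSucc_zero, h0] at h5
        exact hr h5
      · simp only [id] at h4
        subst h4
        have : Fin.castSucc (1 : Fin (M + 2)) = 1 := rfl
        simp only [this, h1] at h5
        exact hr' h5
    · simp
  obtain ⟨p, hp⟩ : ∃ p, MvPolynomial.eval p (∏ a ∈ T, φ (dpoly a)) ≠ 0 := by
    by_contra! h
    exact hne (MvPolynomial.funext fun x => by rw [h x, map_zero])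
  refine ⟨fun v => w v * p v, fun a ha => ⟨fun h => ?_, fun h => ?_⟩⟩
  · by_contra! hc
    have haT : a ∈ T := Finset.mem_filter.mpr ⟨Finset.mem_univ _, ha, hc⟩
    apply hp
    rw [map_prod]
    exact Finset.prod_eq_zero haT (by rw [hφ, h])
  · rw [dpoly_eq_gdet, eval_gdet, Matrix.det_apply]
    apply Finset.sum_eq_zero
    intro σ _
    have h01 : σ (Fin.castSucc 0) ≠ σ (Fin.castSucc 1) := by
      intro hh
      have := σ.injective hh
      simp at this
    by_cases hI : a (σ (Fin.castSucc 0)) ∈ I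
    · rw [Finset.prod_eq_zero (Finset.mem_univ (Fin.castSucc (0 : Fin (M + 2)))), smul_zero]
      rw [Matrix.of_apply, Fin.snoc_castSucc]
      simp only [w, id]
      rw [if_pos (Or.inl ⟨trivial, hI⟩), zero_mul]
    by_cases hJ : a (σ (Fin.castSucc 1)) ∈ J
    · rw [Finset.prod_eq_zero (Finset.mem_univ (Fin.castSucc (1 : Fin (M + 2)))), smul_zero]
      rw [Matrix.of_apply, Fin.snoc_castSucc]
      simp only [w, id]
      rw [if_pos (Or.inr ⟨trivial, hJ⟩), zero_mul]
    exact absurd (h _ _ hI hJ) h01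

noncomputable def DS {n : ℕ} (M : ℕ) (K : Finset (Fin n)) : MvPolynomial (Fin n × Fin (M + 2)) ℂ :=
  if h : K.card = M + 3 then dpoly (K.orderEmbOfFin h) else 1

lemma DS_irred {n M : ℕ} (K : Finset (Fin n)) (h : K.card = M + 3) : Irreducible (DS M K) := by
  unfold DS
  rw [dif_pos h]
  exact dpoly_irred _ (K.orderEmbOfFin h).injective

lemma dpoly_DS {n M : ℕ} (a : Fin (M + 3) → Fin n) (ha : Function.Injective a)
    (K : Finset (Fin n)) (hK : Finset.univ.image a = K) :
    ∃ ε : ℂ, ε ≠ 0 ∧ dpoly a = MvPolynomial.C ε * DS M K := by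
  have hc : K.card = M + 3 := by
    rw [← hK, Finset.card_image_of_injective _ ha]; simp
  set b := K.orderEmbOfFin hc with hb
  have hr : ∀ r, ∃ t, b t = a r := by
    intro r
    have : a r ∈ (K : Set (Fin n)) := by rw [← hK]; simp
    rw [← Finset.range_orderEmbOfFin K hc] at this
    exact this
  choose f hf using hr
  have finj : Function.Injective f := by
    intro x y hxy
    apply ha
    rw [← hf, ← hf, hxy]
  let σ : Equiv.Perm (Fin (M + 3)) := Equiv.ofBijective f (Finite.injective_iff_bijective.mp finj)
  refine ⟨((Equiv.Perm.sign σ : ℤ) : ℂ), ?_, ?_⟩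
  · exact_mod_cast (Units.ne_zero _)
  · unfold DS
    rw [dif_pos hc]
    unfold dpoly
    rw [map_intCast, ← Matrix.det_permute]
    congr 1
    ext1 r c
    simp only [Matrix.submatrix_apply, Matrix.of_apply, id]
    have : (K.orderEmbOfFin hc) (σ r) = a r := hf r
    rw [this]

def Bad {n : ℕ} (I J K : Finset (Fin n)) : Prop := ∀ x ∈ K, ∀ y ∈ K, x ∉ I → y ∉ J → x = y

lemma family' {n : ℕ} (M : ℕ) (I J : Finset (Fin n)) :
    ∃ q : Fin n × Fin (M + 2) → ℂ, ∀ K : Finset (Fin n), K.card = M + 3 →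
      (MvPolynomial.eval q (DS M K) = 0 ↔ Bad I J K) := by
  obtain ⟨q, hq⟩ := family (M := M) I J
  refine ⟨q, fun K hK => ?_⟩
  unfold DS
  rw [dif_pos hK, hq _ (K.orderEmbOfFin hK).injective]
  have hm : ∀ x ∈ K, ∃ r, K.orderEmbOfFin hK r = x := by
    intro x hx
    have : x ∈ (K : Set (Fin n)) := hx
    rwa [← Finset.range_orderEmbOfFin K hK] at this
  constructor
  · intro h x hx y hy h1 h2
    obtain ⟨r, rfl⟩ := hm x hx
    obtain ⟨t, rfl⟩ := hm y hy
    rw [h r t h1 h2]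
  · intro h r t h1 h2
    exact (K.orderEmbOfFin hK).injective
      (h _ (Finset.orderEmbOfFin_mem K hK r) _ (Finset.orderEmbOfFin_mem K hK t) h1 h2)

lemma prime_factor {n M : ℕ} (p : MvPolynomial (Fin n × Fin (M + 2)) ℂ) (hp : Prime p)
    (hnv : ∀ q : Fin n → Fin (M + 2) → ℂ, GenPos q → MvPolynomial.eval (fun v => q v.1 v.2) p ≠ 0) :
    ∃ K : Finset (Fin n), K.card = M + 3 ∧ ∃ c : ℂ, c ≠ 0 ∧ p = MvPolynomial.C c * DS M K := by
  classical
  let T : Finset (Finset (Fin n)) := Finset.univ.filter fun K => K.card = M + 3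
  have hrad : ∏ K ∈ T, DS M K ∈ (Ideal.span {p}).radical := by
    rw [← MvPolynomial.vanishingIdeal_zeroLocus_eq_radical (K := ℂ), MvPolynomial.mem_vanishingIdeal_iff]
    intro x hx
    rw [MvPolynomial.mem_zeroLocus_iff] at hx
    have hx := hx p (Ideal.mem_span_singleton_self p)
    rw [MvPolynomial.aeval_eq_eval] at hx ⊢
    have : ¬ GenPos (fun i j => x (i, j)) := fun h => hnv _ h hx
    unfold GenPos at this
    push Not at this
    obtain ⟨a, ha, h0⟩ := this
    rw [← eval_dpoly] at h0
    obtain ⟨ε, hε, h1⟩ := dpoly_DS a ha _ rfl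
    rw [h1, map_mul, MvPolynomial.eval_C] at h0
    have h2 := (mul_eq_zero.mp h0).resolve_left hε
    change MvPolynomial.eval x _ = 0
    rw [map_prod]
    refine Finset.prod_eq_zero ?_ h2
    simp [T, Finset.card_image_of_injective _ ha]
  obtain ⟨N, hN⟩ := hrad
  rw [Ideal.mem_span_singleton] at hN
  obtain ⟨K, hK, hd⟩ := hp.exists_mem_finset_dvd (hp.dvd_of_dvd_pow hN)
  have hK : K.card = M + 3 := by simpa [T] using hK
  refine ⟨K, hK, ?_⟩
  obtain ⟨u, hu⟩ := (hp.irreducible.associated_of_dvd (DS_irred K hK) hd).symm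
  obtain ⟨c, hc, hc'⟩ := (MvPolynomial.isUnit_iff_eq_C_of_isReduced).mp u.isUnit
  exact ⟨c, hc.ne_zero, by rw [← hu, hc', mul_comm]⟩

lemma factor {n M : ℕ} (P : MvPolynomial (Fin n × Fin (M + 2)) ℂ) (h0 : P ≠ 0)
    (hnv : ∀ q : Fin n → Fin (M + 2) → ℂ, GenPos q → MvPolynomial.eval (fun v => q v.1 v.2) P ≠ 0) :
    ∃ (c : ℂ) (s : Multiset (Finset (Fin n))), c ≠ 0 ∧ (∀ K ∈ s, K.card = M + 3) ∧
      P = MvPolynomial.C c * (s.map (DS M)).prod := by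
  induction P using UniqueFactorizationMonoid.induction_on_prime with
  | h₁ => exact absurd rfl h0
  | h₂ x hx =>
    obtain ⟨c, hc, hc'⟩ := (MvPolynomial.isUnit_iff_eq_C_of_isReduced).mp hx
    exact ⟨c, 0, hc.ne_zero, by simp, by simp [hc']⟩
  | h₃ a p ha hp ih =>
    obtain ⟨c, s, hc, hs, he⟩ := ih ha (fun q hq h => hnv q hq (by rw [map_mul, h, mul_zero]))
    obtain ⟨K, hK, d, hd, hpd⟩ := prime_factor p hp
      (fun q hq h => hnv q hq (by rw [map_mul, h, zero_mul]))
    refine ⟨d * c, K ::ₘ s, mul_ne_zero hd hc, ?_, ?_⟩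
    · intro L hL
      rcases Multiset.mem_cons.mp hL with rfl | h
      · exact hK
      · exact hs _ h
    · rw [hpd, he, Multiset.map_cons, Multiset.prod_cons, map_mul]
      ring

lemma eval_factor {n M : ℕ} (c : ℂ) (hc : c ≠ 0) (s : Multiset (Finset (Fin n)))
    (q : Fin n × Fin (M + 2) → ℂ) :
    MvPolynomial.eval q (MvPolynomial.C c * (s.map (DS M)).prod) = 0 ↔
      ∃ K ∈ s, MvPolynomial.eval q (DS M K) = 0 := by
  rw [map_mul, MvPolynomial.eval_C, mul_eq_zero, or_iff_right hc, map_multiset_prod,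
    Multiset.prod_eq_zero_iff]
  simp

def Cl {n : ℕ} (a b c : Finset (Fin n) → Prop) : Prop :=
  ∀ I J, (∃ K, a K ∧ Bad I J K) → (∃ K, b K ∧ Bad I J K) → ∃ K, c K ∧ Bad I J K

lemma Cl.swap {n : ℕ} {a b c : Finset (Fin n) → Prop} (h : Cl a b c) : Cl b a c :=
  fun I J h1 h2 => h I J h2 h1

lemma comb_adj {n M : ℕ} {a b c : Finset (Fin n) → Prop}
    (ca : ∀ K, a K → K.card = M + 3) (cb : ∀ K, b K → K.card = M + 3) (cc : ∀ K, c K → K.card = M + 3)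
    (dab : ∀ K, a K → ¬ b K) (dac : ∀ K, a K → ¬ c K) (dbc : ∀ K, b K → ¬ c K)
    (h : Cl a b c) (I J : Finset (Fin n)) (hI : a I) (hJ : b J) : (I ∩ J).card = M + 2 := by
  have hI' := ca I hI
  have hJ' := cb J hJ
  have hlt : (I ∩ J).card < M + 3 := by
    by_contra! hge
    have h1 : I ∩ J = I := Finset.eq_of_subset_of_card_le Finset.inter_subset_left (by omega)
    have h2 : I ∩ J = J := Finset.eq_of_subset_of_card_le Finset.inter_subset_right (by omega)
    exact dab I hI (by rw [← h1, h2]; exact hJ)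
  obtain ⟨K, hK, hbad⟩ := h I J ⟨I, hI, fun x hx y hy h1 _ => absurd hx h1⟩
    ⟨J, hJ, fun x hx y hy _ h1 => absurd hy h1⟩
  have hK' := cc K hK
  have h1 : ¬ K ⊆ I := fun hs => dac I hI
    (by rw [← Finset.eq_of_subset_of_card_le hs (by omega)]; exact hK)
  have h2 : ¬ K ⊆ J := fun hs => dbc J hJ
    (by rw [← Finset.eq_of_subset_of_card_le hs (by omega)]; exact hK)
  obtain ⟨x, hx, hxI⟩ := Finset.not_subset.mp h1
  obtain ⟨y, hy, hyJ⟩ := Finset.not_subset.mp h2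
  have hs : K.erase x ⊆ I ∩ J := by
    intro z hz
    obtain ⟨hzx, hzK⟩ := Finset.mem_erase.mp hz
    have hxy := hbad x hx y hy hxI hyJ
    rw [Finset.mem_inter]
    constructor
    · by_contra hzI
      exact hzx ((hbad z hzK y hy hzI hyJ).trans hxy.symm)
    · by_contra hzJ
      exact hzx (hbad x hx z hzK hxI hzJ).symm
  have := Finset.card_le_card hs
  rw [Finset.card_erase_of_mem hx] at this
  omega

lemma comb_W {n M : ℕ} {a b c : Finset (Fin n) → Prop}
    (cc : ∀ K, c K → K.card = M + 3) (h : Cl a b c) (S : Finset (Fin n)) (hS : S.card = M + 2)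
    (i j : Fin n) (hi : a (insert i S)) (hj : b (insert j S)) : ∃ k, k ∉ S ∧ c (insert k S) := by
  have hb : ∀ i, Bad S S (insert i S) := by
    intro i x hx y hy h1 h2
    rw [Finset.mem_insert] at hx hy
    rw [hx.resolve_right h1, hy.resolve_right h2]
  obtain ⟨K, hK, hbad⟩ := h S S ⟨_, hi, hb i⟩ ⟨_, hj, hb j⟩
  have hK' := cc K hK
  have : ¬ K ⊆ S := fun hs => by
    have := Finset.card_le_card hs
    omega
  obtain ⟨k, hk, hkS⟩ := Finset.not_subset.mp this
  refine ⟨k, hkS, ?_⟩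
  have : K = insert k S := by
    apply Finset.eq_of_subset_of_card_le
    · intro z hz
      rw [Finset.mem_insert]
      by_cases hzS : z ∈ S
      · exact Or.inr hzS
      · exact Or.inl (hbad z hz k hk hzS hkS)
    · rw [Finset.card_insert_of_notMem hkS]; omega
  rw [← this]; exact hK

lemma comb_V {n M : ℕ} {a b c : Finset (Fin n) → Prop}
    (cc : ∀ K, c K → K.card = M + 3) (h : Cl a b c) (T I J : Finset (Fin n)) 
    (hI : a I) (hJ : b J) (hIT : I ⊆ T) (hJT : J ⊆ T) : ∃ K, c K ∧ K ⊆ T := by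
  have hb : ∀ I, I ⊆ T → Bad T ∅ I := by
    intro I hI x hx y hy h1 h2
    exact absurd (hI hx) h1
  obtain ⟨K, hK, hbad⟩ := h T ∅ ⟨_, hI, hb _ hIT⟩ ⟨_, hJ, hb _ hJT⟩
  have hK' := cc K hK
  refine ⟨K, hK, fun x hx => ?_⟩
  by_contra hxT
  have : K ⊆ {x} := fun y hy => by
    rw [Finset.mem_singleton]
    exact (hbad x hx y hy hxT (by simp)).symm
  have := Finset.card_le_card this
  simp at this
  omega

lemma card_inter_ins {n : ℕ} (X R : Finset (Fin n)) (x y : Fin n) (hx : x ∉ R) (hy : y ∉ R) (hxy : x ≠ y) :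
    (X ∩ insert x (insert y R)).card = (if x ∈ X then 1 else 0) + (if y ∈ X then 1 else 0) + (X ∩ R).card := by
  by_cases h1 : x ∈ X <;> by_cases h2 : y ∈ X <;>
    simp [h1, h2, hx, hy, hxy, Finset.inter_insert_of_mem, Finset.inter_insert_of_notMem]
  all_goals ring

lemma comb_char {n M : ℕ} (R X : Finset (Fin n)) (hR : R.card = M + 1) (hX : X.card = M + 3)
    (p q r t : Fin n) (hp : p ∉ R) (hq : q ∉ R) (hr : r ∉ R) (ht : t ∉ R)
    (hpq : p ≠ q) (hpr : p ≠ r) (hpt : p ≠ t) (hqr : q ≠ r) (hqt : q ≠ t) (hrt : r ≠ t)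
    (h1 : (X ∩ insert p (insert r R)).card = M + 2)
    (h2 : (X ∩ insert p (insert t R)).card = M + 2)
    (h3 : (X ∩ insert q (insert r R)).card = M + 2)
    (h4 : (X ∩ insert q (insert t R)).card = M + 2) :
    X = insert p (insert q R) ∨ X = insert r (insert t R) := by
  have hle : (X ∩ R).card ≤ M + 1 := hR ▸ Finset.card_le_card Finset.inter_subset_right
  have hall : (X ∩ insert p (insert q (insert r (insert t R)))).card ≤ M + 3 :=
    hX ▸ Finset.card_le_card Finset.inter_subset_left
  have key : ∀ x y, x ∉ R → y ∉ R → x ≠ y → x ∈ X → y ∈ X → (X ∩ R).card = M + 1 →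
      X = insert x (insert y R) := by
    intro x y hx hy hxy hxX hyX hc
    have hRX : R ⊆ X := by
      have : X ∩ R = R := Finset.eq_of_subset_of_card_le Finset.inter_subset_right (by omega)
      rw [← this]; exact Finset.inter_subset_left
    symm
    apply Finset.eq_of_subset_of_card_le
    · intro z hz
      simp only [Finset.mem_insert] at hz
      rcases hz with rfl | rfl | hz
      · exact hxX
      · exact hyX
      · exact hRX hz
    · rw [Finset.card_insert_of_notMem (by simp [hx, hxy]), Finset.card_insert_of_notMem hy]; omega
  rw [card_inter_ins _ _ _ _ (by simp [*]) (by simp [*]) hpq,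
    ] at hall
  rw [card_inter_ins _ _ _ _ hr ht hrt] at hall
  rw [card_inter_ins _ _ _ _ hp hr hpr] at h1
  rw [card_inter_ins _ _ _ _ hp ht hpt] at h2
  rw [card_inter_ins _ _ _ _ hq hr hqr] at h3
  rw [card_inter_ins _ _ _ _ hq ht hqt] at h4
  by_cases ip : p ∈ X <;> by_cases iq : q ∈ X <;> by_cases ir : r ∈ X <;> by_cases it : t ∈ X <;>
    simp only [ip, iq, ir, it, if_true, if_false] at h1 h2 h3 h4 hall
  all_goals first
    | omega
    | exact Or.inl (key p q hp hq hpq ip iq (by omega))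
    | exact Or.inr (key r t hr ht hrt ir it (by omega))

lemma comb_main {n M : ℕ} {a b c : Finset (Fin n) → Prop}
    (ca : ∀ K, a K → K.card = M + 3) (cb : ∀ K, b K → K.card = M + 3) (cc : ∀ K, c K → K.card = M + 3)
    (dab : ∀ K, a K → ¬ b K) (dac : ∀ K, a K → ¬ c K) (dbc : ∀ K, b K → ¬ c K)
    (hab : Cl a b c) (hac : Cl a c b) (hbc : Cl b c a) (I J : Finset (Fin n)) (hI : a I) (hJ : b J) :
    ∃ (R : Finset (Fin n)) (s i j k : Fin n), R.card = M + 1 ∧ s ∉ R ∧ i ∉ R ∧ j ∉ R ∧ k ∉ R ∧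
      s ≠ i ∧ s ≠ j ∧ s ≠ k ∧ i ≠ j ∧ i ≠ k ∧ j ≠ k ∧
      (∀ K, a K ↔ K = insert s (insert i R) ∨ K = insert j (insert k R)) ∧
      (∀ K, b K ↔ K = insert s (insert j R) ∨ K = insert i (insert k R)) ∧
      (∀ K, c K ↔ K = insert s (insert k R) ∨ K = insert i (insert j R)) := by
  have dba : ∀ K, b K → ¬ a K := fun K h1 h2 => dab K h2 h1
  have dca : ∀ K, c K → ¬ a K := fun K h1 h2 => dac K h2 h1
  have dcb : ∀ K, c K → ¬ b K := fun K h1 h2 => dbc K h2 h1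
  have adjab := comb_adj ca cb cc dab dac dbc hab
  have adjac := comb_adj ca cc cb dac dab dcb hac
  have adjbc := comb_adj cb cc ca dbc dba dca hbc
  have hIJ := adjab I J hI hJ
  -- S, i, j
  obtain ⟨S, hSdef⟩ : ∃ S, S = I ∩ J := ⟨_, rfl⟩
  have hS : S.card = M + 2 := by rw [hSdef]; exact hIJ
  have ex : ∀ L : Finset (Fin n), L.card = M + 3 → S ⊆ L → ∃ i, i ∉ S ∧ L = insert i S := by
    intro L hL hsub
    have h1 : ¬ L ⊆ S := fun h => by have := Finset.card_le_card h; omega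
    obtain ⟨i, hi, hiS⟩ := Finset.not_subset.mp h1
    refine ⟨i, hiS, (Finset.eq_of_subset_of_card_le (Finset.insert_subset hi hsub) ?_).symm⟩
    rw [Finset.card_insert_of_notMem hiS]; omega
  obtain ⟨i, hiS, rfl⟩ := ex I (ca I hI) (hSdef ▸ Finset.inter_subset_left)
  obtain ⟨j, hjS, rfl⟩ := ex J (cb J hJ) (hSdef ▸ Finset.inter_subset_right)
  clear hIJ hSdef
  have hij : i ≠ j := fun h => dab _ hI (h ▸ hJ)
  obtain ⟨k, hkS, hK⟩ := comb_W cc hab S hS i j hI hJ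
  have hik : i ≠ k := fun h => dac _ hI (h ▸ hK)
  have hjk : j ≠ k := fun h => dbc _ hJ (h ▸ hK)
  obtain ⟨K', hK', hsub⟩ := comb_V cc hab (insert i (insert j S)) _ _ hI hJ
    (by intro x; simp only [Finset.mem_insert]; tauto) (by intro x; simp only [Finset.mem_insert]; tauto)
  have hK'c := cc K' hK'
  have hTc : (insert i (insert j S)).card = M + 4 := by
    rw [Finset.card_insert_of_notMem (by simp [hij, hiS]), Finset.card_insert_of_notMem hjS]; omega
  obtain ⟨s, hsT, hsK⟩ := Finset.not_subset.mp (show ¬ insert i (insert j S) ⊆ K' from fun h => by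
    have := Finset.card_le_card h; omega)
  have hK'eq : K' = (insert i (insert j S)).erase s := by
    apply Finset.eq_of_subset_of_card_le
    · exact Finset.subset_erase.mpr ⟨hsub, hsK⟩
    · rw [Finset.card_erase_of_mem hsT]; omega
  have hsi : s ≠ i := by
    rintro rfl
    rw [Finset.erase_insert (by simp [hij, hiS])] at hK'eq
    exact dbc _ hJ (hK'eq ▸ hK')
  have hsj : s ≠ j := by
    rintro rfl
    rw [Finset.insert_comm, Finset.erase_insert (by simp [hij.symm, hjS])] at hK'eq
    exact dac _ hI (hK'eq ▸ hK')
  have hsS : s ∈ S := by simpa [hsi, hsj] using hsT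
  have hsk : s ≠ k := fun h => hkS (h ▸ hsS)
  obtain ⟨R, hsR, rfl⟩ : ∃ R, s ∉ R ∧ S = insert s R :=
    ⟨S.erase s, by simp, (Finset.insert_erase hsS).symm⟩
  have hRc : R.card = M + 1 := by
    rw [Finset.card_insert_of_notMem hsR] at hS; omega
  have hK'2 : K' = insert i (insert j R) := by
    rw [hK'eq]
    ext x
    simp only [Finset.mem_erase, Finset.mem_insert]
    constructor
    · tauto
    · rintro (rfl | rfl | h)
      · exact ⟨hsi.symm, by tauto⟩
      · exact ⟨hsj.symm, by tauto⟩
      · exact ⟨fun h' => hsR (h' ▸ h), by tauto⟩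
  rw [hK'2] at hK'
  clear hK'eq hK'2 hsub hsK hsT hTc hK'c ex
  simp only [Finset.mem_insert, not_or] at hiS hjS hkS
  have hiR := hiS.2
  have hjR := hjS.2
  have hkR := hkS.2
  rw [Finset.insert_comm] at hI hJ hK
  -- I'
  have hI' : a (insert j (insert k R)) := by
    obtain ⟨y, hy, hya⟩ := comb_W ca hbc (insert j R)
      (by rw [Finset.card_insert_of_notMem hjR]; omega) s i hJ hK'
    simp only [Finset.mem_insert, not_or] at hy
    have h1 := adjac _ _ hya hK
    rw [card_inter_ins _ _ _ _ hsR hkR hsk] at h1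
    have h2 : insert y (insert j R) ∩ R = R := by
      apply Finset.inter_eq_right.mpr; intro x; simp only [Finset.mem_insert]; tauto
    rw [h2] at h1
    have h3 : s ≠ y := by rintro rfl; exact dba _ hJ hya
    have h4 : k = y := by
      by_contra hne
      simp [hsR, hkR, h3, hne, hsj, hjk.symm] at h1
      omega
    rw [Finset.insert_comm, h4]; exact hya
  have hJ' : b (insert i (insert k R)) := by
    obtain ⟨y, hy, hya⟩ := comb_W cb hac (insert i R)
      (by rw [Finset.card_insert_of_notMem hiR]; omega) s j hI (by rw [Finset.insert_comm]; exact hK')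
    simp only [Finset.mem_insert, not_or] at hy
    have h1 := adjbc _ _ hya hK
    rw [card_inter_ins _ _ _ _ hsR hkR hsk] at h1
    have h2 : insert y (insert i R) ∩ R = R := by
      apply Finset.inter_eq_right.mpr; intro x; simp only [Finset.mem_insert]; tauto
    rw [h2] at h1
    have h3 : s ≠ y := by rintro rfl; exact dab _ hI hya
    have h4 : k = y := by
      by_contra hne
      simp [hsR, hkR, h3, hne, hsi, hik.symm] at h1
      omega
    rw [Finset.insert_comm, h4]; exact hya
  refine ⟨R, s, i, j, k, hRc, hsR, hiR, hjR, hkR, hsi, hsj, hsk, hij, hik, hjk, ?_, ?_, ?_⟩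
  · refine fun X => ⟨fun hX => ?_, ?_⟩
    · exact comb_char R X hRc (ca X hX) s i j k hsR hiR hjR hkR hsi hsj hsk hij hik hjk
        (adjab _ _ hX hJ) (adjac _ _ hX hK) (adjac _ _ hX hK') (adjab _ _ hX hJ')
    · rintro (rfl | rfl) <;> assumption
  · refine fun X => ⟨fun hX => ?_, ?_⟩
    · refine comb_char R X hRc (cb X hX) s j i k hsR hjR hiR hkR hsj hsi hsk hij.symm hjk hik
        ?_ (adjbc _ _ hX hK) ?_ ?_
      · rw [Finset.inter_comm]; exact adjab _ _ hI hX
      · rw [Finset.insert_comm]; exact adjbc _ _ hX hK'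
      · rw [Finset.inter_comm]; exact adjab _ _ hI' hX
    · rintro (rfl | rfl) <;> assumption
  · refine fun X => ⟨fun hX => ?_, ?_⟩
    · refine comb_char R X hRc (cc X hX) s k i j hsR hkR hiR hjR hsk hsi hsj hik.symm hjk.symm hij
        ?_ ?_ ?_ ?_
      · rw [Finset.inter_comm]; exact adjac _ _ hI hX
      · rw [Finset.inter_comm]; exact adjbc _ _ hJ hX
      · rw [Finset.inter_comm, Finset.insert_comm]; exact adjbc _ _ hJ' hX
      · rw [Finset.inter_comm, Finset.insert_comm]; exact adjac _ _ hI' hX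
    · rintro (rfl | rfl) <;> assumption

lemma wedge {n M : ℕ} (i : Fin (M + 1) → Fin n) (hi : Function.Injective i) :
    ∃ ε : ℂ, ε ≠ 0 ∧ ∀ u : Fin n → ℂ × ℂ, ∃ q : Fin n × Fin (M + 2) → ℂ,
      ∀ x y, x ∉ Set.range i → y ∉ Set.range i →
        MvPolynomial.eval q (dpoly (Fin.snoc (Fin.snoc i x) y)) =
          ε * ((u x).1 * (u y).2 - (u x).2 * (u y).1) := by
  classical
  let π : Equiv.Perm (Fin (M + 1 + 2)) :=
    Equiv.swap (⟨M, by omega⟩) (⟨M + 1, by omega⟩) * Equiv.swap (⟨M, by omega⟩) (⟨M + 2, by omega⟩)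
  have hπ0 : ∀ j : Fin (M + 1 + 2), j.val < M → π j = j := by
    intro j hj
    simp only [π, Equiv.Perm.mul_apply]
    rw [Equiv.swap_apply_of_ne_of_ne (a := (⟨M, by omega⟩ : Fin (M + 1 + 2))) (b := ⟨M + 2, by omega⟩),
      Equiv.swap_apply_of_ne_of_ne] <;>
    · intro h
      have := congrArg Fin.val h
      simp at this
      omega
  have hπ1 : π ⟨M, by omega⟩ = ⟨M + 2, by omega⟩ := by
    simp only [π, Equiv.Perm.mul_apply]
    rw [Equiv.swap_apply_left, Equiv.swap_apply_of_ne_of_ne] <;> simp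
  have hπ2 : π ⟨M + 1, by omega⟩ = ⟨M, by omega⟩ := by
    simp only [π, Equiv.Perm.mul_apply]
    rw [Equiv.swap_apply_of_ne_of_ne (a := (⟨M, by omega⟩ : Fin (M + 1 + 2))) (b := ⟨M + 2, by omega⟩),
      Equiv.swap_apply_right] <;> simp
  have hπ3 : π ⟨M + 2, by omega⟩ = ⟨M + 1, by omega⟩ := by
    simp only [π, Equiv.Perm.mul_apply]
    rw [Equiv.swap_apply_right, Equiv.swap_apply_left]
  let S : Matrix (Fin (M + 1)) (Fin (M + 1)) ℂ := Matrix.of (fun r j : Fin (M + 1) =>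
    (Fin.snoc (fun j : Fin M => if r = (1 : Equiv.Perm (Fin (M + 1))) j.castSucc then 1 else 0) 1
      : Fin (M + 1) → ℂ) j)
  have hS : S.det ≠ 0 := simplex_det 1
  have hsg : ((Equiv.Perm.sign π : ℤ) : ℂ) ≠ 0 := by exact_mod_cast (Units.ne_zero _)
  refine ⟨((Equiv.Perm.sign π : ℤ) : ℂ)⁻¹ * S.det, mul_ne_zero (inv_ne_zero hsg) hS, fun u => ?_⟩
  let q : Fin n × Fin (M + 2) → ℂ := fun v =>
    if v.1 ∈ Set.range i then (if ∃ t : Fin (M + 1), v.1 = i t ∧ t.val = v.2.val ∧ t.val < M then 1 else 0)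
    else if v.2.val = M then (u v.1).1 else if v.2.val = M + 1 then (u v.1).2 else 0
  refine ⟨q, fun x y hx hy => ?_⟩
  rw [dpoly_eq_gdet, eval_gdet]
  set N : Matrix (Fin (M + 1 + 2)) (Fin (M + 1 + 2)) ℂ := (Matrix.of (fun r j : Fin (M + 2 + 1) =>
    (Fin.snoc (fun j : Fin (M + 2) =>
      q ((Fin.snoc (Fin.snoc i x) y : Fin (M + 3) → Fin n) r, id j)) 1 : Fin (M + 2 + 1) → ℂ) j)) with hN
  have hNv : ∀ r (j : Fin (M + 1 + 2)) (h : j.val < M + 2), N r j =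
      q ((Fin.snoc (Fin.snoc i x) y : Fin (M + 3) → Fin n) r, ⟨j.val, h⟩) := by
    intro r j h
    simp only [hN, Matrix.of_apply]
    exact Fin.snoc_castSucc (α := fun _ => ℂ) 1 _ (⟨j.val, h⟩ : Fin (M + 2))
  have hNl : ∀ r, N r ⟨M + 2, by omega⟩ = 1 := by
    intro r
    simp only [hN, Matrix.of_apply]
    exact Fin.snoc_last (α := fun _ => ℂ) _ _
  have hr0 : ∀ t : Fin (M + 1), (Fin.snoc (Fin.snoc i x) y : Fin (M + 3) → Fin n) (Fin.castAdd 2 t) = i t := by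
    intro t
    have : (Fin.castAdd 2 t : Fin (M + 3)) = Fin.castSucc (Fin.castSucc t) := rfl
    rw [this, Fin.snoc_castSucc, Fin.snoc_castSucc]
  have hr1 : (Fin.snoc (Fin.snoc i x) y : Fin (M + 3) → Fin n) (Fin.natAdd (M + 1) (0 : Fin 2)) = x := by
    have : (Fin.natAdd (M + 1) (0 : Fin 2) : Fin (M + 3)) = Fin.castSucc (Fin.last _) := rfl
    rw [this, Fin.snoc_castSucc, Fin.snoc_last]
  have hr2 : (Fin.snoc (Fin.snoc i x) y : Fin (M + 3) → Fin n) (Fin.natAdd (M + 1) (1 : Fin 2)) = y := by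
    have : (Fin.natAdd (M + 1) (1 : Fin 2) : Fin (M + 3)) = (Fin.last _) := rfl
    rw [this, Fin.snoc_last]
  have hc1 : π (Fin.natAdd (M + 1) (0 : Fin 2)) = ⟨M, by omega⟩ := hπ2
  have hc2 : π (Fin.natAdd (M + 1) (1 : Fin 2)) = ⟨M + 1, by omega⟩ := hπ3
  have hblock : (N.submatrix id π).submatrix finSumFinEquiv finSumFinEquiv =
      Matrix.fromBlocks S 0 (Matrix.of fun r c => N (Fin.natAdd (M + 1) r) (π (Fin.castAdd 2 c)))
        !![(u x).1, (u x).2; (u y).1, (u y).2] := by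
    ext r c
    rcases r with r | r <;> rcases c with c | c
    · simp only [Matrix.submatrix_apply, finSumFinEquiv_apply_left, Matrix.fromBlocks_apply₁₁, id, S,
        Matrix.of_apply]
      refine Fin.lastCases ?_ (fun c => ?_) c
      · have : π (Fin.castAdd 2 (Fin.last M)) = ⟨M + 2, by omega⟩ := hπ1
        rw [this, hNl, Fin.snoc_last]
      · rw [hπ0 _ (by simp), hNv _ _ (by simp; omega), hr0, Fin.snoc_castSucc]
        simp only [q]
        rw [if_pos (Set.mem_range_self r)]
        congr 1
        simp only [hi.eq_iff, eq_iff_iff]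
        constructor
        · rintro ⟨t, rfl, h1, h2⟩
          exact Fin.ext h1
        · rintro rfl
          exact ⟨_, rfl, rfl, by simp⟩
    · simp only [Matrix.submatrix_apply, finSumFinEquiv_apply_left, Matrix.fromBlocks_apply₁₂, id,
        finSumFinEquiv_apply_right, Matrix.zero_apply]
      fin_cases c
      · simp only [Fin.zero_eta, Fin.isValue]
        rw [hc1, hNv _ _ (by simp), hr0]
        simp only [q]
        rw [if_pos (Set.mem_range_self r), if_neg]
        rintro ⟨t, _, h1, h2⟩
        omega
      · simp only [Fin.mk_one, Fin.isValue]
        rw [hc2, hNv _ _ (by simp), hr0]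
        simp only [q]
        rw [if_pos (Set.mem_range_self r), if_neg]
        rintro ⟨t, _, h1, h2⟩
        omega
    · simp
    · simp only [Matrix.submatrix_apply, Matrix.fromBlocks_apply₂₂, id,
        finSumFinEquiv_apply_right]
      fin_cases c <;> fin_cases r <;> simp only [Fin.zero_eta, Fin.isValue, Fin.mk_one]
      · rw [hc1, hNv _ _ (by simp), hr1]; simp [q]; simp_all
      · rw [hc1, hNv _ _ (by simp), hr2]; simp [q]; simp_all
      · rw [hc2, hNv _ _ (by simp), hr1]; simp [q]; simp_all
      · rw [hc2, hNv _ _ (by simp), hr2]; simp [q]; simp_all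
  have hdet := congrArg Matrix.det hblock
  rw [Matrix.det_submatrix_equiv_self, Matrix.det_permute', Matrix.det_fromBlocks_zero₁₂,
    Matrix.det_fin_two_of] at hdet
  rw [mul_assoc, ← hdet, ← mul_assoc, inv_mul_cancel₀ hsg, one_mul]

lemma two_pow_inj {x y : ℕ} (h : (2 : ℂ) ^ x = 2 ^ y) : x = y := by
  have : (2 : ℕ) ^ x = 2 ^ y := by exact_mod_cast h
  exact Nat.pow_right_injective (le_refl 2) this

lemma numeric (α β γ : ℂ) (hγ : γ ≠ 0) (a1 a2 b1 b2 c1 c2 : ℕ)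
    (ha1 : a1 ≠ 0) (hb1 : b1 ≠ 0)
    (h : ∀ a b c d t : ℂ, α * (a * d - b * c) ^ a1 * t ^ a2 + β * (-(t * b)) ^ b1 * (-c) ^ b2
      + γ * a ^ c1 * (-(t * d)) ^ c2 = 0) :
    a1 = 1 ∧ a2 = 1 ∧ b1 = 1 ∧ b2 = 1 ∧ c1 = 1 ∧ c2 = 1 ∧ α = γ ∧ β = γ := by
  obtain ⟨B, hB⟩ : ∃ B, B = β * (-1) ^ b1 * (-1) ^ b2 := ⟨_, rfl⟩
  obtain ⟨G, hG⟩ : ∃ G, G = γ * (-1) ^ c2 := ⟨_, rfl⟩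
  have hG0 : G ≠ 0 := by rw [hG]; exact mul_ne_zero hγ (pow_ne_zero _ (by norm_num))
  have h' : ∀ a b c d t : ℂ, α * (a * d - b * c) ^ a1 * t ^ a2 + B * t ^ b1 * b ^ b1 * c ^ b2
      + G * a ^ c1 * t ^ c2 * d ^ c2 = 0 := by
    intro a b c d t
    rw [← h a b c d t, hB, hG, neg_pow (t * b), neg_pow c, neg_pow (t * d), mul_pow, mul_pow]
    ring
  clear h
  have e0 := h' 1 1 1 1 1
  have e1 := h' 2 2 1 1 1
  have e2 := h' 1 1 2 2 1
  have e3 := h' 1 1 1 1 2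
  have f0 := h' 1 0 0 1 1
  have f1 := h' 2 0 0 1 1
  have f2 := h' 1 0 0 1 2
  have g := h' 2 1 1 1 1
  norm_num [ha1, hb1] at e0 e1 e2 e3 f0 f1 f2 g
  have hBG : B = -G := by linear_combination e0
  have hαG : α = -G := by linear_combination f0
  have q1 : b1 = c1 := two_pow_inj (mul_left_cancel₀ hG0 (by rw [hBG] at e1; linear_combination -e1))
  have q2 : b2 = c2 := two_pow_inj (mul_left_cancel₀ hG0 (by rw [hBG] at e2; linear_combination -e2))
  have q3 : b1 = c2 := two_pow_inj (mul_left_cancel₀ hG0 (by rw [hBG] at e3; linear_combination -e3))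
  have q4 : a1 = c1 := two_pow_inj (mul_left_cancel₀ hG0 (by rw [hαG] at f1; linear_combination -f1))
  have q5 : a2 = c2 := two_pow_inj (mul_left_cancel₀ hG0 (by rw [hαG] at f2; linear_combination -f2))
  have q6 : c1 = 1 := two_pow_inj (mul_left_cancel₀ hG0 (by
    rw [hBG, hαG] at g; linear_combination g))
  have r1 : b1 = 1 := by omega
  have r2 : b2 = 1 := by omega
  have r3 : c2 = 1 := by omega
  refine ⟨by omega, by omega, r1, r2, q6, r3, ?_, ?_⟩
  · rw [hαG, hG, r3]; ring
  · rw [r1, r2] at hB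
    rw [r3] at hG
    have : B = β := by rw [hB]; ring
    rw [← this, hBG, hG]; ring

lemma snoc_range {N n : ℕ} (f : Fin N → Fin n) (x : Fin n) :
    Set.range (Fin.snoc f x : Fin (N + 1) → Fin n) = insert x (Set.range f) := by
  ext z
  simp only [Set.mem_range, Set.mem_insert_iff]
  constructor
  · rintro ⟨r, rfl⟩
    refine Fin.lastCases ?_ (fun r => ?_) r
    · left; simp
    · right; exact ⟨r, by simp⟩
  · rintro (rfl | ⟨r, rfl⟩)
    · exact ⟨Fin.last _, by simp⟩
    · exact ⟨r.castSucc, by simp⟩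

lemma snoc_inj {N n : ℕ} (f : Fin N → Fin n) (hf : Function.Injective f) (x : Fin n)
    (hx : x ∉ Set.range f) : Function.Injective (Fin.snoc f x : Fin (N + 1) → Fin n) := by
  intro r t
  refine Fin.lastCases ?_ (fun r => ?_) r <;> refine Fin.lastCases ?_ (fun t => ?_) t
  · simp
  · intro h
    simp only [Fin.snoc_last, Fin.snoc_castSucc] at h
    exact absurd ⟨t, h.symm⟩ hx
  · intro h
    simp only [Fin.snoc_last, Fin.snoc_castSucc] at h
    exact absurd ⟨r, h⟩ hx
  · intro h
    simp only [Fin.snoc_castSucc] at h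
    rw [hf h]

/-- The ABC lemma (the paper's `m` is `M + 2 ≥ 2`, and `n ≥ m + 3`):
if `A, B, C` are pairwise coprime polynomials nonvanishing on `ℰⁿ(ℂ^m, gp)`,
at least one of them nonconstant, with `A + B + C = 0`, then for some distinct
indices `i_1,...,i_{m-1},j,k,l,s` and some `α ≠ 0`:
`A = α·d_{𝐢,j,k}·d_{𝐢,l,s}`, `B = α·d_{𝐢,j,l}·d_{𝐢,s,k}`, `C = α·d_{𝐢,j,s}·d_{𝐢,k,l}`. -/
theorem abc_lemma {n M : ℕ} (hn : M + 5 ≤ n)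
    (A B C : MvPolynomial (Fin n × Fin (M + 2)) ℂ)
    (hAB : ∀ p, p ∣ A → p ∣ B → IsUnit p)
    (hAC : ∀ p, p ∣ A → p ∣ C → IsUnit p)
    (hBC : ∀ p, p ∣ B → p ∣ C → IsUnit p)
    (hA : ∀ q : Fin n → Fin (M + 2) → ℂ, GenPos q →
      MvPolynomial.eval (fun v => q v.1 v.2) A ≠ 0)
    (hB : ∀ q : Fin n → Fin (M + 2) → ℂ, GenPos q →
      MvPolynomial.eval (fun v => q v.1 v.2) B ≠ 0)
    (hC : ∀ q : Fin n → Fin (M + 2) → ℂ, GenPos q →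
      MvPolynomial.eval (fun v => q v.1 v.2) C ≠ 0)
    (hnc : A.totalDegree ≠ 0 ∨ B.totalDegree ≠ 0 ∨ C.totalDegree ≠ 0)
    (hsum : A + B + C = 0) :
    ∃ (i : Fin (M + 1) → Fin n) (j k l s : Fin n) (α : ℂ), α ≠ 0 ∧
      Function.Injective
        (Fin.snoc (Fin.snoc (Fin.snoc (Fin.snoc i j) k) l) s : Fin (M + 5) → Fin n) ∧
      A = MvPolynomial.C α * dpoly (Fin.snoc (Fin.snoc i j) k) * dpoly (Fin.snoc (Fin.snoc i l) s) ∧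
      B = MvPolynomial.C α * dpoly (Fin.snoc (Fin.snoc i j) l) * dpoly (Fin.snoc (Fin.snoc i s) k) ∧
      C = MvPolynomial.C α * dpoly (Fin.snoc (Fin.snoc i j) s) * dpoly (Fin.snoc (Fin.snoc i k) l) := by
  classical
  obtain ⟨q0, hq0⟩ := family (n := n) (M := M) ∅ ∅
  have hgp : GenPos (fun i j => q0 (i, j)) := by
    intro a ha h0
    rw [← eval_dpoly, hq0 a ha] at h0
    have := h0 0 1 (by simp) (by simp)
    simp at this
  have nz : ∀ P : MvPolynomial (Fin n × Fin (M + 2)) ℂ, (∀ q : Fin n → Fin (M + 2) → ℂ, GenPos q →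
      MvPolynomial.eval (fun v => q v.1 v.2) P ≠ 0) → P ≠ 0 := by
    rintro P hP rfl
    exact hP _ hgp (map_zero _)
  obtain ⟨cA, sA, hcA, hsA, eA⟩ := factor A (nz A hA) hA
  obtain ⟨cB, sB, hcB, hsB, eB⟩ := factor B (nz B hB) hB
  obtain ⟨cC, sC, hcC, hsC, eC⟩ := factor C (nz C hC) hC
  have dis : ∀ (P Q : MvPolynomial (Fin n × Fin (M + 2)) ℂ), (∀ p, p ∣ P → p ∣ Q → IsUnit p) →
      ∀ (c d : ℂ) (s t : Multiset (Finset (Fin n))), (∀ K ∈ s, K.card = M + 3) →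
      P = MvPolynomial.C c * (s.map (DS M)).prod → Q = MvPolynomial.C d * (t.map (DS M)).prod →
      ∀ K, K ∈ s → ¬ K ∈ t := by
    intro P Q hPQ c d s t hs hP hQ K hKs hKt
    refine (DS_irred K (hs K hKs)).not_isUnit (hPQ _ ?_ ?_)
    · rw [hP]
      exact Dvd.dvd.mul_left (Multiset.dvd_prod (Multiset.mem_map_of_mem _ hKs)) _
    · rw [hQ]
      exact Dvd.dvd.mul_left (Multiset.dvd_prod (Multiset.mem_map_of_mem _ hKt)) _
  have clo : ∀ (P Q S : MvPolynomial (Fin n × Fin (M + 2)) ℂ), P + Q + S = 0 →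
      ∀ (c d e : ℂ) (s t r : Multiset (Finset (Fin n))), c ≠ 0 → d ≠ 0 → e ≠ 0 →
      (∀ K ∈ s, K.card = M + 3) → (∀ K ∈ t, K.card = M + 3) → (∀ K ∈ r, K.card = M + 3) →
      P = MvPolynomial.C c * (s.map (DS M)).prod → Q = MvPolynomial.C d * (t.map (DS M)).prod →
      S = MvPolynomial.C e * (r.map (DS M)).prod → Cl (· ∈ s) (· ∈ t) (· ∈ r) := by
    rintro P Q S hPQS c d e s t r hc hd he hs ht hr hP hQ hS I J ⟨K, hK, hKb⟩ ⟨L, hL, hLb⟩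
    obtain ⟨q, hq⟩ := family' M I J
    have h1 : MvPolynomial.eval q P = 0 := by
      rw [hP, eval_factor c hc]
      exact ⟨K, hK, (hq K (hs K hK)).mpr hKb⟩
    have h2 : MvPolynomial.eval q Q = 0 := by
      rw [hQ, eval_factor d hd]
      exact ⟨L, hL, (hq L (ht L hL)).mpr hLb⟩
    have h3 : MvPolynomial.eval q S = 0 := by
      have := congrArg (MvPolynomial.eval q) hPQS
      rw [map_add, map_add, h1, h2, map_zero, zero_add, zero_add] at this
      exact this
    rw [hS, eval_factor e he] at h3
    obtain ⟨X, hX, hX0⟩ := h3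
    exact ⟨X, hX, (hq X (hr X hX)).mp hX0⟩
  have dab := dis A B hAB cA cB sA sB hsA eA eB
  have dac := dis A C hAC cA cC sA sC hsA eA eC
  have dbc := dis B C hBC cB cC sB sC hsB eB eC
  have clab := clo A B C hsum _ _ _ _ _ _ hcA hcB hcC hsA hsB hsC eA eB eC
  have clac := clo A C B (by rw [← hsum]; ring) _ _ _ _ _ _ hcA hcC hcB hsA hsC hsB eA eC eB
  have clbc := clo B C A (by rw [← hsum]; ring) _ _ _ _ _ _ hcB hcC hcA hsB hsC hsA eB eC eA
  have tdC : ∀ (x y z : MvPolynomial (Fin n × Fin (M + 2)) ℂ) (c d : ℂ), x + y + z = 0 →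
      x = MvPolynomial.C c → y = MvPolynomial.C d → x.totalDegree = 0 ∧ y.totalDegree = 0 ∧
      z.totalDegree = 0 := by
    rintro x y z c d h rfl rfl
    refine ⟨MvPolynomial.totalDegree_C _, MvPolynomial.totalDegree_C _, ?_⟩
    have : z = MvPolynomial.C (-(c + d)) := by
      rw [map_neg, map_add]; linear_combination h
    rw [this, MvPolynomial.totalDegree_C]
  have hne : (∃ I, I ∈ sA) ∧ ∃ J, J ∈ sB := by
    rcases Multiset.empty_or_exists_mem sA with h1 | ⟨I, hI⟩
    · rcases Multiset.empty_or_exists_mem sB with h2 | ⟨J, hJ⟩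
      · exfalso
        have := tdC A B C cA cB hsum (by simp [eA, h1]) (by simp [eB, h2])
        tauto
      · rcases Multiset.empty_or_exists_mem sC with h2 | ⟨K, hK⟩
        · exfalso
          have := tdC A C B cA cC (by rw [← hsum]; ring) (by simp [eA, h1]) (by simp [eC, h2])
          tauto
        · obtain ⟨R, s, i, j, k, -, -, -, -, -, -, -, -, -, -, -, -, -, h⟩ :=
            comb_main hsB hsC hsA dbc (fun K h1 h2 => dab K h2 h1) (fun K h1 h2 => dac K h2 h1)
              clbc clab.swap clac.swap J K hJ hK
          exact ⟨⟨_, (h _).mpr (Or.inl rfl)⟩, J, hJ⟩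
    · rcases Multiset.empty_or_exists_mem sB with h2 | ⟨J, hJ⟩
      · rcases Multiset.empty_or_exists_mem sC with h3 | ⟨K, hK⟩
        · exfalso
          have := tdC B C A cB cC (by rw [← hsum]; ring) (by simp [eB, h2]) (by simp [eC, h3])
          tauto
        · obtain ⟨R, s, i, j, k, -, -, -, -, -, -, -, -, -, -, -, -, -, h⟩ :=
            comb_main hsA hsC hsB dac dab (fun K h1 h2 => dbc K h2 h1)
              clac clab clbc.swap I K hI hK
          exact ⟨⟨I, hI⟩, ⟨_, (h _).mpr (Or.inl rfl)⟩⟩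
      · exact ⟨⟨I, hI⟩, J, hJ⟩
  obtain ⟨⟨I, hI⟩, J, hJ⟩ := hne
  obtain ⟨R, j, k, l, s, hR, hjR, hkR, hlR, hsR, hjk, hjl, hjs, hkl, hks, hls, fa, fb, fc⟩ :=
    comb_main hsA hsB hsC dab dac dbc clab clac clbc I J hI hJ
  obtain ⟨i, hi⟩ : ∃ i : Fin (M + 1) → Fin n, i = R.orderEmbOfFin hR := ⟨_, rfl⟩
  have hinj : Function.Injective i := by rw [hi]; exact (R.orderEmbOfFin hR).injective
  have hrng : Set.range i = R := by rw [hi]; exact Finset.range_orderEmbOfFin R hR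
  have nr : ∀ x, x ∉ R → x ∉ Set.range i := by intro x hx; rw [hrng]; exact_mod_cast hx
  have si : ∀ x y, x ∉ R → y ∉ R → x ≠ y →
      Function.Injective (Fin.snoc (Fin.snoc i x) y : Fin (M + 3) → Fin n) := by
    intro x y hx hy hxy
    apply snoc_inj _ (snoc_inj i hinj x (nr x hx))
    rw [snoc_range]
    simp only [Set.mem_insert_iff, not_or]
    exact ⟨hxy.symm, nr y hy⟩
  have sim : ∀ x y, Finset.univ.image (Fin.snoc (Fin.snoc i x) y : Fin (M + 3) → Fin n) =
      insert y (insert x R) := by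
    intro x y
    apply Finset.coe_injective
    rw [Finset.coe_image, Finset.coe_univ, Set.image_univ, snoc_range, snoc_range, hrng]
    simp
  have expr : ∀ (P : MvPolynomial (Fin n × Fin (M + 2)) ℂ) (c : ℂ) (t : Multiset (Finset (Fin n))),
      c ≠ 0 → P = MvPolynomial.C c * (t.map (DS M)).prod → ∀ x y z w : Fin n, x ∉ R → y ∉ R → z ∉ R →
      w ∉ R → x ≠ y → z ≠ w → x ≠ z → x ≠ w →
      (∀ K, K ∈ t ↔ K = insert y (insert x R) ∨ K = insert w (insert z R)) →
      ∃ (α : ℂ) (a1 a2 : ℕ), α ≠ 0 ∧ a1 ≠ 0 ∧ a2 ≠ 0 ∧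
        P = MvPolynomial.C α * dpoly (Fin.snoc (Fin.snoc i x) y) ^ a1 *
          dpoly (Fin.snoc (Fin.snoc i z) w) ^ a2 := by
    intro P c t hc hP x y z w hx hy hz hw hxy hzw hxz hxw ht
    obtain ⟨ε, hε, h1⟩ := dpoly_DS _ (si x y hx hy hxy) _ (sim x y)
    obtain ⟨δ, hδ, h2⟩ := dpoly_DS _ (si z w hz hw hzw) _ (sim z w)
    have hKK : insert y (insert x R) ≠ insert w (insert z R) := by
      intro h
      have : x ∈ insert w (insert z R) := by rw [← h]; simp
      simp [hx, hxz, hxw] at this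
    have htf : t.toFinset = {insert y (insert x R), insert w (insert z R)} := by
      ext K
      rw [Multiset.mem_toFinset, ht]; simp
    rw [Finset.prod_multiset_map_count, htf, Finset.prod_pair hKK] at hP
    refine ⟨c * ε⁻¹ ^ t.count (insert y (insert x R)) * δ⁻¹ ^ t.count (insert w (insert z R)),
      t.count (insert y (insert x R)), t.count (insert w (insert z R)), ?_, ?_, ?_, ?_⟩
    · exact mul_ne_zero (mul_ne_zero hc (pow_ne_zero _ (inv_ne_zero hε))) (pow_ne_zero _ (inv_ne_zero hδ))
    · exact Multiset.count_ne_zero.mpr ((ht _).mpr (Or.inl rfl))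
    · exact Multiset.count_ne_zero.mpr ((ht _).mpr (Or.inr rfl))
    · have k1 : DS M (insert y (insert x R)) = MvPolynomial.C ε⁻¹ * dpoly (Fin.snoc (Fin.snoc i x) y) := by
        rw [h1, ← mul_assoc, ← map_mul, inv_mul_cancel₀ hε, map_one, one_mul]
      have k2 : DS M (insert w (insert z R)) = MvPolynomial.C δ⁻¹ * dpoly (Fin.snoc (Fin.snoc i z) w) := by
        rw [h2, ← mul_assoc, ← map_mul, inv_mul_cancel₀ hδ, map_one, one_mul]
      rw [hP, k1, k2, mul_pow, mul_pow, map_mul, map_mul, map_pow, map_pow]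
      ring
  obtain ⟨α, a1, a2, hα, ha1, ha2, xA⟩ := expr A cA sA hcA eA j k l s hjR hkR hlR hsR hjk hls hjl hjs
    (fun K => by rw [fa, Finset.insert_comm j k, Finset.insert_comm l s])
  obtain ⟨β, b1, b2, hβ, hb1, hb2, xB⟩ := expr B cB sB hcB eB j l s k hjR hlR hsR hkR hjl hks.symm hjs hjk
    (fun K => by rw [fb, Finset.insert_comm j l])
  obtain ⟨γ, c1, c2, hγ, hc1, hc2, xC⟩ := expr C cC sC hcC eC j s k l hjR hsR hkR hlR hjs hkl hjk hjl
    (fun K => by rw [fc, Finset.insert_comm j s, Finset.insert_comm k l])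
  obtain ⟨ε, hε, hw⟩ := wedge i hinj
  have key := numeric (α * ε ^ (a1 + a2)) (β * ε ^ (b1 + b2)) (γ * ε ^ (c1 + c2))
    (mul_ne_zero hγ (pow_ne_zero _ hε)) a1 a2 b1 b2 c1 c2 ha1 hb1 (by
      intro a b c d t
      obtain ⟨q, hq⟩ := hw (fun x => if x = j then (a, b) else if x = k then (c, d) else
        if x = l then (t, 0) else (0, 1))
      have h0 := congrArg (MvPolynomial.eval q) hsum
      rw [xA, xB, xC] at h0
      simp only [map_add, map_mul, map_pow, MvPolynomial.eval_C, map_zero] at h0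
      rw [hq j k (nr _ hjR) (nr _ hkR), hq l s (nr _ hlR) (nr _ hsR), hq j l (nr _ hjR) (nr _ hlR),
        hq s k (nr _ hsR) (nr _ hkR), hq j s (nr _ hjR) (nr _ hsR), hq k l (nr _ hkR) (nr _ hlR)] at h0
      simp only [if_true, hjk.symm, hjl.symm, hkl.symm, hjs.symm, hks.symm, hls.symm, if_false] at h0
      rw [← h0, mul_pow ε (a * d - b * c)]
      ring)
  obtain ⟨rfl, rfl, rfl, rfl, rfl, rfl, q1, q2⟩ := key
  have hαγ : α = γ := mul_right_cancel₀ (pow_ne_zero _ hε) q1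
  have hβγ : β = γ := mul_right_cancel₀ (pow_ne_zero _ hε) q2
  subst hαγ
  subst hβγ
  refine ⟨i, j, k, l, s, β, hβ, ?_, ?_, ?_, ?_⟩
  · apply snoc_inj
    · apply snoc_inj _ (si j k hjR hkR hjk)
      rw [snoc_range, snoc_range]
      simp only [Set.mem_insert_iff, not_or]
      exact ⟨hkl.symm, hjl.symm, nr l hlR⟩
    · rw [snoc_range, snoc_range, snoc_range]
      simp only [Set.mem_insert_iff, not_or]
      exact ⟨hls.symm, hks.symm, hjs.symm, nr s hsR⟩
  · simpa only [pow_one] using xA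
  · simpa only [pow_one] using xB
  · simpa only [pow_one] using xC
end

section
/- Two determinant cross ratios e_{𝐢;j,k,l,s} and e_{𝐢';j',k',l',s'} coincide as functions on ℰⁿ(ℂ^m,gp) if and only if the underlying sets {𝐢} = {𝐢'} and (j',k',l',s') is obtained from (j,k,l,s) by a Kleinian permutation (i.e., the identity, (j k)(l s), (j l)(k s), or (j s)(k l)). -/
/-- The determinant cross ratio `e_{𝐢;j,k,l,s}` (here the paper's `m` is `M + 1`,
so `𝐢` has `m - 1 = M` entries and points lie in `ℂ^{M+1}`). -/
noncomputable def ecr {n M : ℕ} (q : Fin n → Fin (M + 1) → ℂ) (i : Fin M → Fin n)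
    (j k l s : Fin n) : ℂ :=
  (dA q (Fin.snoc (Fin.snoc i j) k) * dA q (Fin.snoc (Fin.snoc i l) s)) /
  (dA q (Fin.snoc (Fin.snoc i j) l) * dA q (Fin.snoc (Fin.snoc i k) s))


theorem xsnoc_perm {N : ℕ} (σ : Equiv.Perm (Fin N)) :
    ∃ τ : Equiv.Perm (Fin (N+1)), ∀ {α : Type} (a : Fin N → α) (x : α),
      (Fin.snoc (a ∘ σ) x : Fin (N+1) → α) = (Fin.snoc a x : Fin (N+1) → α) ∘ τ := by
  refine ⟨(finSuccEquivLast.trans (Equiv.optionCongr σ)).trans finSuccEquivLast.symm, ?_⟩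
  intro α a x
  funext r
  refine Fin.lastCases ?_ (fun r => ?_) r <;> simp

theorem xdA_perm {n m : ℕ} (q : Fin n → Fin m → ℂ) (a : Fin (m + 1) → Fin n)
    (τ : Equiv.Perm (Fin (m+1))) : dA q (a ∘ τ) = (Equiv.Perm.sign τ : ℤ) * dA q a := by
  unfold dA
  rw [← Matrix.det_permute]
  rfl

theorem xdA_swap {n M : ℕ} (q : Fin n → Fin (M+1) → ℂ) (i : Fin M → Fin n) (j k : Fin n) :
    dA q (Fin.snoc (Fin.snoc i k) j) = - dA q (Fin.snoc (Fin.snoc i j) k) := by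
  have h : (Fin.snoc (Fin.snoc i k) j : Fin (M+2) → Fin n) =
      (Fin.snoc (Fin.snoc i j) k : Fin (M+2) → Fin n) ∘
        (Equiv.swap (Fin.castSucc (Fin.last M)) (Fin.last (M+1))) := by
    funext r
    refine Fin.lastCases ?_ (fun r => ?_) r
    · simp
    · refine Fin.lastCases ?_ (fun r => ?_) r
      · simp
      · have h1 : (r.castSucc.castSucc : Fin (M+2)) ≠ (Fin.last M).castSucc := by
          simp [Fin.ext_iff]; omega
        have h2 : (r.castSucc.castSucc : Fin (M+2)) ≠ Fin.last (M+1) := by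
          simp [Fin.ext_iff]; omega
        simp [Equiv.swap_apply_of_ne_of_ne h1 h2]
  rw [h, xdA_perm, Equiv.Perm.sign_swap]
  · simp
  · simp [Fin.ext_iff]

theorem xecr_perm {n M : ℕ} (q : Fin n → Fin (M+1) → ℂ) (i : Fin M → Fin n)
    (σ : Equiv.Perm (Fin M)) (j k l s : Fin n) :
    ecr q (i ∘ σ) j k l s = ecr q i j k l s := by
  obtain ⟨τ, hτ⟩ := xsnoc_perm σ
  obtain ⟨ρ, hρ⟩ := xsnoc_perm τ
  have hs : ((Equiv.Perm.sign ρ : ℤ) : ℂ) ≠ 0 := by simp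
  unfold ecr
  simp only [hτ, hρ, xdA_perm]
  generalize ((Equiv.Perm.sign ρ : ℤ) : ℂ) = e at *
  rw [show ∀ a b : ℂ, e * a * (e * b) = (e*e) * (a*b) by intros; ring, 
    show ∀ a b : ℂ, e * a * (e * b) = (e*e) * (a*b) by intros; ring, 
    mul_div_mul_left _ _ (mul_ne_zero hs hs)]

theorem xback {n M : ℕ} (i i' : Fin M → Fin n) (j k l s j' k' l' s' : Fin n)
    (hi : Function.Injective i) (hi' : Function.Injective i')
    (h : Set.range i = Set.range i' ∧
        ((j', k', l', s') = (j, k, l, s) ∨ (j', k', l', s') = (k, j, s, l) ∨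
          (j', k', l', s') = (l, s, j, k) ∨ (j', k', l', s') = (s, l, k, j)))
    (q : Fin n → Fin (M + 1) → ℂ) : ecr q i j k l s = ecr q i' j' k' l' s' := by
  obtain ⟨hr, h⟩ := h
  let σ : Equiv.Perm (Fin M) := (Equiv.ofInjective i' hi').trans
    ((Equiv.setCongr hr.symm).trans (Equiv.ofInjective i hi).symm)
  have hσ : i' = i ∘ σ := by
    funext r
    simp [σ, Equiv.apply_ofInjective_symm hi]
  rw [hσ, xecr_perm]
  simp only [Prod.mk.injEq] at h
  rcases h with ⟨rfl, rfl, rfl, rfl⟩ | ⟨rfl, rfl, rfl, rfl⟩ | ⟨rfl, rfl, rfl, rfl⟩ | ⟨rfl, rfl, rfl, rfl⟩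
  · rfl
  · unfold ecr
    rw [xdA_swap q i j' k', xdA_swap q i l' s']
    ring
  · unfold ecr
    rw [xdA_swap q i j' l', xdA_swap q i k' s']
    ring
  · unfold ecr
    rw [xdA_swap q i j' k', xdA_swap q i l' s', xdA_swap q i j' l', xdA_swap q i k' s']
    ring

theorem xcomb {α : Type} (R R' : Set α) (j k l s j' k' l' s' : α)
    (hj : j ∉ R) (hk : k ∉ R) (hl : l ∉ R) (hs : s ∉ R)
    (hj' : j' ∉ R') (hk' : k' ∉ R') (hl' : l' ∉ R') (hs' : s' ∉ R')
    (hjk : j ≠ k) (hjl : j ≠ l) (hjs : j ≠ s) (hkl : k ≠ l) (hks : k ≠ s) (hls : l ≠ s)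
    (hjk' : j' ≠ k') (hjl' : j' ≠ l') (hjs' : j' ≠ s') (hkl' : k' ≠ l') (hks' : k' ≠ s')
    (hls' : l' ≠ s')
    (h1 : insert k (insert j R) = insert k' (insert j' R') ∨
      insert k (insert j R) = insert s' (insert l' R'))
    (h2 : insert s (insert l R) = insert k' (insert j' R') ∨
      insert s (insert l R) = insert s' (insert l' R'))
    (h3 : insert l (insert j R) = insert l' (insert j' R') ∨
      insert l (insert j R) = insert s' (insert k' R'))
    (h4 : insert s (insert k R) = insert l' (insert j' R') ∨
      insert s (insert k R) = insert s' (insert k' R')) :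
    R = R' ∧
        ((j', k', l', s') = (j, k, l, s) ∨ (j', k', l', s') = (k, j, s, l) ∨
          (j', k', l', s') = (l, s, j, k) ∨ (j', k', l', s') = (s, l, k, j)) := by
  have hR : R = R' := by
    simp only [Set.ext_iff, Set.mem_insert_iff] at h1 h2
    ext x
    rcases h1 with h1 | h1 <;> rcases h2 with h2 | h2
    · grind
    · grind
    · grind
    · grind
  subst hR
  refine ⟨rfl, ?_⟩
  simp only [Set.ext_iff, Set.mem_insert_iff] at h1 h2 h3 h4
  simp only [Prod.mk.injEq]
  have a1 : j' = j ∨ j' = k ∨ j' = l ∨ j' = s := by grind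
  rcases a1 with rfl | rfl | rfl | rfl <;> grind

/-- moment curve in homogeneous coordinates -/
theorem xmoment (n m : ℕ) : ∃ w : Fin n → Fin (m+1) → ℂ, (∀ x, w x (Fin.last m) = 1) ∧
    ∀ a : Fin (m+1) → Fin n, Function.Injective a → (Matrix.of fun r => w (a r)).det ≠ 0 := by
  refine ⟨fun x c => ((x : ℕ) : ℂ) ^ ((Fin.rev c : Fin (m+1)) : ℕ), fun x => by simp, ?_⟩
  intro a ha
  have h : (Matrix.of fun r => (fun c : Fin (m+1) => (((a r : Fin n) : ℕ) : ℂ) ^ ((Fin.rev c : Fin (m+1)) : ℕ)))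
    = (Matrix.vandermonde (fun r => (((a r : Fin n) : ℕ) : ℂ))).submatrix id (Fin.revPerm) := by
    ext r c
    simp [Matrix.vandermonde]
  rw [h, Matrix.det_permute']
  refine mul_ne_zero (by simp) ?_
  rw [Matrix.det_vandermonde_ne_zero_iff]
  intro x y hxy
  apply ha
  simpa [Fin.ext_iff] using hxy

/-- degenerate exactly along `S` -/
theorem xdegen {n m : ℕ} (hm : 1 ≤ m) (S : Fin (m+1) → Fin n) (hS : Function.Injective S) :
    ∃ (Q : ℂ → Fin n → Fin m → ℂ) (A B : (Fin (m+1) → Fin n) → ℂ),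
      (∀ a, Function.Injective a → ∀ t, dA (Q t) a = (1 - t) * A a + t * B a) ∧
      (∀ a, Function.Injective a → B a ≠ 0) ∧
      (∀ a, Function.Injective a → (A a = 0 ↔ Set.range a = Set.range S)) := by
  classical
  obtain ⟨w, hw1, hw⟩ := xmoment n m
  let p := S 0
  let G : (Fin n → Fin (m+1) → ℂ) → (Fin (m+1) → Fin n) → ℂ :=
    fun u a => (Matrix.of fun r => u (a r)).det
  -- functional of the row at position r
  let φ : (Fin (m+1) → Fin n) → Fin (m+1) → Module.Dual ℂ (Fin (m+1) → ℂ) :=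
    fun a r => (Matrix.detRowAlternating (R := ℂ) (n := Fin (m+1))).toMultilinearMap.toLinearMap
      (fun r => w (a r)) r
  have φdef : ∀ a r v, φ a r v = (Matrix.of (Function.update (fun r => w (a r)) r v)).det := by
    intro a r v; rfl
  have φG : ∀ a r v, Function.Injective a → a r = p → G (Function.update w p v) a = φ a r v := by
    intro a r v ha har
    rw [φdef]
    simp only [G]
    congr 2
    funext x
    by_cases hx : x = r
    · subst hx; simp [har]
    · have : a x ≠ p := fun h => hx (ha (h.trans har.symm))
      simp [hx, this]
  have φw : ∀ a r y, φ a r (w y) = (Matrix.of fun x => w (Function.update a r y x)).det := by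
    intro a r y
    rw [φdef]
    congr 1
    congr 1
    funext x
    by_cases hx : x = r
    · subst hx; simp
    · simp [hx]
  have hker : ∀ r, r ≠ 0 → φ S 0 (w (S r)) = 0 := by
    intro r hr
    rw [φw]
    apply Matrix.det_zero_of_row_eq hr.symm
    funext y
    simp [hr]
  let I := {x : (Fin (m+1) → Fin n) × Fin (m+1) // Function.Injective x.1 ∧ x.1 x.2 = p ∧
    Set.range x.1 ≠ Set.range S}
  let f : Option I → Module.Dual ℂ (Fin (m+1) → ℂ) := fun o =>
    match o with
    | none => LinearMap.proj (Fin.last m)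
    | some x => φ x.1.1 x.1.2
  obtain ⟨v, hvS, hv⟩ := Module.Dual.exists_forall_mem_ne_zero_of_forall_exists
    (LinearMap.ker (φ S 0)) f (by
      rintro (_ | ⟨⟨a, r⟩, ha, har, hne⟩)
      · refine ⟨w (S (Fin.last m)), hker _ ?_, ?_⟩
        · simp [Fin.ext_iff]; omega
        · simp [f, hw1]
      · simp only at ha har hne
        have : ∃ y, S y ∉ Set.range a := by
          by_contra! hcon
          apply hne
          have hsub : Finset.univ.image S ⊆ Finset.univ.image a := by
            intro z hz
            obtain ⟨y, -, rfl⟩ := Finset.mem_image.1 hz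
            obtain ⟨x, hx⟩ := hcon y
            exact Finset.mem_image.2 ⟨x, Finset.mem_univ _, hx⟩
          have := Finset.eq_of_subset_of_card_le hsub (by
            rw [Finset.card_image_of_injective _ ha, Finset.card_image_of_injective _ hS])
          have h2 := congrArg (fun s : Finset (Fin n) => (s : Set (Fin n))) this
          simpa using h2.symm
        obtain ⟨y, hy⟩ := this
        refine ⟨w (S y), hker _ ?_, ?_⟩
        · rintro rfl
          exact hy ⟨r, har⟩
        · change φ a r (w (S y)) ≠ 0
          rw [φw]
          apply hw
          intro x x' hxx
          by_cases h1 : x = r <;> by_cases h2 : x' = r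
          · rw [h1, h2]
          · subst h1
            simp [h2] at hxx
            exact (hy ⟨_, hxx.symm⟩).elim
          · subst h2
            simp [h1] at hxx
            exact (hy ⟨_, hxx⟩).elim
          · simp [h1, h2] at hxx
            exact ha hxx)
  have hvl : v (Fin.last m) ≠ 0 := hv none
  have hva : ∀ a r, Function.Injective a → a r = p → Set.range a ≠ Set.range S → φ a r v ≠ 0 :=
    fun a r h1 h2 h3 => hv (some ⟨(a, r), h1, h2, h3⟩)
  have hvS' : φ S 0 v = 0 := hvS
  let c := (v (Fin.last m))⁻¹
  have hc : c ≠ 0 := inv_ne_zero hvl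
  let W : ℂ → Fin n → Fin (m+1) → ℂ := fun t => Function.update w p ((1 - t) • (c • v) + t • w p)
  have hWl : ∀ t x, W t x (Fin.last m) = 1 := by
    intro t x
    by_cases hx : x = p
    · subst hx
      simp [W, hw1, c, hvl]
    · simp [W, hx, hw1]
  have hdA : ∀ t a, dA (fun x => Fin.init (W t x)) a = G (W t) a := by
    intro t a
    unfold dA
    simp only [G]
    congr 1
    ext r y
    simp only [Matrix.of_apply]
    have := Fin.snoc_init_self (W t (a r))
    rw [hWl] at this
    exact congrFun this y
  have hW0 : W 0 = Function.update w p (c • v) := by simp [W]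
  have hnp : ∀ a, (∀ r, a r ≠ p) → ∀ u, G (Function.update w p u) a = G w a := by
    intro a h u
    simp [G, h]
  refine ⟨fun t x => Fin.init (W t x), fun a => G (W 0) a, fun a => G w a, ?_, hw, ?_⟩
  · intro a ha t
    rw [hdA, hW0]
    by_cases hp : ∃ r, a r = p
    · obtain ⟨r, hr⟩ := hp
      have h1 : G w a = φ a r (w p) := by rw [← φG a r _ ha hr]; simp
      simp only [W]
      rw [φG a r _ ha hr, φG a r _ ha hr, h1]
      simp only [map_add, map_smul, smul_eq_mul]
    · push Not at hp
      simp only [W]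
      rw [hnp a hp, hnp a hp]
      ring
  · intro a ha
    change G (W 0) a = 0 ↔ _
    rw [hW0]
    by_cases hp : ∃ r, a r = p
    · obtain ⟨r, hr⟩ := hp
      rw [φG a r _ ha hr, map_smul]
      constructor
      · intro h
        by_contra hne
        exact smul_ne_zero hc (hva a r ha hr hne) h
      · intro h
        let σ : Equiv.Perm (Fin (m+1)) := (Equiv.ofInjective a ha).trans
          ((Equiv.setCongr h).trans (Equiv.ofInjective S hS).symm)
        have hσ : a = S ∘ σ := by
          funext r
          simp [σ, Equiv.apply_ofInjective_symm hS]
        have h3 : φ a r v = (Equiv.Perm.sign σ : ℤ) * φ S 0 v := by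
          rw [← φG a r _ ha hr, ← φG S 0 _ hS rfl]
          simp only [G]
          rw [← Matrix.det_permute, hσ]
          rfl
        rw [h3, hvS']; simp
    · push Not at hp
      rw [hnp a hp]
      constructor
      · intro h; exact (hw a ha h).elim
      · intro h
        have : p ∈ Set.range a := by rw [h]; exact ⟨0, rfl⟩
        obtain ⟨r, hr⟩ := this
        exact (hp r hr).elim

theorem xlimit {n m : ℕ} (hm : 1 ≤ m) (a1 a2 a3 a4 b1 b2 b3 b4 S : Fin (m+1) → Fin n)
    (hS : Function.Injective S)
    (i1 : Function.Injective a1) (i2 : Function.Injective a2) (i3 : Function.Injective a3)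
    (i4 : Function.Injective a4)
    (j1 : Function.Injective b1) (j2 : Function.Injective b2) (j3 : Function.Injective b3)
    (j4 : Function.Injective b4)
    (H : ∀ q : Fin n → Fin m → ℂ, GenPos q → (dA q a1 * dA q a2) / (dA q a3 * dA q a4) =
      (dA q b1 * dA q b2) / (dA q b3 * dA q b4)) :
    (Set.range a1 = Set.range S ∨ Set.range a2 = Set.range S ∨
      Set.range b3 = Set.range S ∨ Set.range b4 = Set.range S) ↔
    (Set.range b1 = Set.range S ∨ Set.range b2 = Set.range S ∨
      Set.range a3 = Set.range S ∨ Set.range a4 = Set.range S) := by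
  obtain ⟨Q, A, B, hQ, hB, hA⟩ := xdegen hm S hS
  have key : ∀ᶠ t in nhdsWithin (0:ℂ) {0}ᶜ, GenPos (Q t) := by
    unfold GenPos
    rw [Filter.eventually_all]
    intro a
    by_cases ha : Function.Injective a
    · simp only [ha, forall_const, hQ a ha]
      by_cases h0 : A a = 0
      · filter_upwards [self_mem_nhdsWithin] with t ht
        rw [h0]
        simpa using ⟨ht, hB a ha⟩
      · have hcont : ContinuousAt (fun t : ℂ => (1 - t) * A a + t * B a) 0 := by fun_prop
        exact (hcont.eventually_ne (by simpa using h0)).filter_mono nhdsWithin_le_nhds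
    · simp [ha]
  have hAd : ∀ a, Function.Injective a → A a = dA (Q 0) a := by
    intro a ha; rw [hQ a ha]; simp
  have hct : ∀ a, Function.Injective a → Continuous (fun t => dA (Q t) a) := by
    intro a ha
    simp only [hQ a ha]
    fun_prop
  have ev : ∀ᶠ t in nhdsWithin (0:ℂ) {0}ᶜ, dA (Q t) a1 * dA (Q t) a2 * (dA (Q t) b3 * dA (Q t) b4)
      = dA (Q t) b1 * dA (Q t) b2 * (dA (Q t) a3 * dA (Q t) a4) := by
    filter_upwards [key] with t ht
    exact (div_eq_div_iff (mul_ne_zero (ht _ i3) (ht _ i4)) (mul_ne_zero (ht _ j3) (ht _ j4))).1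
      (H _ ht)
  have c1 : Continuous fun t => dA (Q t) a1 * dA (Q t) a2 * (dA (Q t) b3 * dA (Q t) b4) :=
    ((hct _ i1).mul (hct _ i2)).mul ((hct _ j3).mul (hct _ j4))
  have c2 : Continuous fun t => dA (Q t) b1 * dA (Q t) b2 * (dA (Q t) a3 * dA (Q t) a4) :=
    ((hct _ j1).mul (hct _ j2)).mul ((hct _ i3).mul (hct _ i4))
  have e0 := tendsto_nhds_unique_of_eventuallyEq
    ((c1.tendsto 0).mono_left nhdsWithin_le_nhds) ((c2.tendsto 0).mono_left nhdsWithin_le_nhds) ev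
  simp only [← hAd _ i1, ← hAd _ i2, ← hAd _ i3, ← hAd _ i4, ← hAd _ j1, ← hAd _ j2,
    ← hAd _ j3, ← hAd _ j4] at e0
  rw [← hA _ i1, ← hA _ i2, ← hA _ i3, ← hA _ i4, ← hA _ j1, ← hA _ j2, ← hA _ j3, ← hA _ j4]
  have e1 := congrArg (fun z : ℂ => z = 0) e0
  simp only [mul_eq_zero, or_assoc] at e1
  exact Iff.of_eq e1

theorem xrange_snoc {N : ℕ} {α : Type} (a : Fin N → α) (x : α) :
    Set.range (Fin.snoc a x : Fin (N+1) → α) = insert x (Set.range a) := by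
  ext y
  simp only [Set.mem_range, Set.mem_insert_iff]
  constructor
  · rintro ⟨r, rfl⟩
    refine Fin.lastCases ?_ (fun r => ?_) r <;> simp
  · rintro (rfl | ⟨r, rfl⟩)
    · exact ⟨Fin.last N, by simp⟩
    · exact ⟨r.castSucc, by simp⟩

theorem xinj_snoc {N : ℕ} {α : Type} (a : Fin N → α) (x : α) :
    Function.Injective (Fin.snoc a x : Fin (N+1) → α) ↔ Function.Injective a ∧ x ∉ Set.range a :=
  Fin.snoc_injective_iff

/-- Two determinant cross ratios coincide as functions on `ℰⁿ(ℂ^m, gp)` iff their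
essential supports coincide as sets and the last four indices differ by a Kleinian
permutation (the paper's `m` is `M + 1`, and `n ≥ m + 3`). -/
theorem dcr_eq_iff_kleinian {n M : ℕ} (hn : M + 4 ≤ n)
    (i i' : Fin M → Fin n) (j k l s j' k' l' s' : Fin n)
    (hdist : Function.Injective
      (Fin.snoc (Fin.snoc (Fin.snoc (Fin.snoc i j) k) l) s : Fin (M + 4) → Fin n))
    (hdist' : Function.Injective
      (Fin.snoc (Fin.snoc (Fin.snoc (Fin.snoc i' j') k') l') s' : Fin (M + 4) → Fin n)) :
    (∀ q : Fin n → Fin (M + 1) → ℂ, GenPos q →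
        ecr q i j k l s = ecr q i' j' k' l' s') ↔
      (Set.range i = Set.range i' ∧
        ((j', k', l', s') = (j, k, l, s) ∨ (j', k', l', s') = (k, j, s, l) ∨
          (j', k', l', s') = (l, s, j, k) ∨ (j', k', l', s') = (s, l, k, j))) := by
  simp only [xinj_snoc, xrange_snoc, Set.mem_insert_iff, not_or] at hdist hdist'
  obtain ⟨⟨⟨⟨hi, hj⟩, hkj, hk⟩, hlk, hlj, hl⟩, hsl, hsk, hsj, hs⟩ := hdist
  obtain ⟨⟨⟨⟨hi', hj'⟩, hkj', hk'⟩, hlk', hlj', hl'⟩, hsl', hsk', hsj', hs'⟩ := hdist'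
  constructor
  · intro H
    have I : ∀ (f : Fin M → Fin n) (x y : Fin n), Function.Injective f → x ∉ Set.range f →
        y ∉ Set.range f → y ≠ x →
        Function.Injective (Fin.snoc (Fin.snoc f x) y : Fin (M+2) → Fin n) := by
      intro f x y hf hx hy hxy
      simp only [xinj_snoc, xrange_snoc, Set.mem_insert_iff, not_or]
      exact ⟨⟨hf, hx⟩, hxy, hy⟩
    have L := fun S hS => xlimit (n := n) (m := M + 1) (by omega)
      (Fin.snoc (Fin.snoc i j) k) (Fin.snoc (Fin.snoc i l) s)
      (Fin.snoc (Fin.snoc i j) l) (Fin.snoc (Fin.snoc i k) s)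
      (Fin.snoc (Fin.snoc i' j') k') (Fin.snoc (Fin.snoc i' l') s')
      (Fin.snoc (Fin.snoc i' j') l') (Fin.snoc (Fin.snoc i' k') s') S hS
      (I i j k hi hj hk hkj) (I i l s hi hl hs hsl)
      (I i j l hi hj hl hlj) (I i k s hi hk hs hsk)
      (I i' j' k' hi' hj' hk' hkj') (I i' l' s' hi' hl' hs' hsl')
      (I i' j' l' hi' hj' hl' hlj') (I i' k' s' hi' hk' hs' hsk') H
    have L1 := L _ (I i j k hi hj hk hkj)
    have L2 := L _ (I i l s hi hl hs hsl)
    have L3 := L _ (I i j l hi hj hl hlj)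
    have L4 := L _ (I i k s hi hk hs hsk)
    simp only [xrange_snoc] at L1 L2 L3 L4
    have ne : ∀ (R : Set (Fin n)) (x y z u : Fin n), x ∉ R → x ≠ z → x ≠ u →
        insert u (insert z R) ≠ insert y (insert x R) := by
      intro R x y z u h1 h2 h3 h
      have : x ∈ insert u (insert z R) := by rw [h]; simp
      simp only [Set.mem_insert_iff] at this
      rcases this with h4 | h4 | h4
      · exact h3 h4
      · exact h2 h4
      · exact h1 h4
    have ne' : ∀ (R : Set (Fin n)) (x y z u : Fin n), y ∉ R → y ≠ z → y ≠ u →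
        insert u (insert z R) ≠ insert y (insert x R) := by
      intro R x y z u h1 h2 h3 h
      have : y ∈ insert u (insert z R) := by rw [h]; simp
      simp only [Set.mem_insert_iff] at this
      rcases this with h4 | h4 | h4
      · exact h3 h4
      · exact h2 h4
      · exact h1 h4
    refine xcomb _ _ j k l s j' k' l' s' hj hk hl hs hj' hk' hl' hs' (Ne.symm hkj) (Ne.symm hlj)
      (Ne.symm hsj) (Ne.symm hlk) (Ne.symm hsk) (Ne.symm hsl) (Ne.symm hkj') (Ne.symm hlj')
      (Ne.symm hsj') (Ne.symm hlk') (Ne.symm hsk') (Ne.symm hsl') ?_ ?_ ?_ ?_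
    · rcases L1.1 (Or.inl trivial) with h | h | h | h
      · exact Or.inl h.symm
      · exact Or.inr h.symm
      · exact (ne' _ _ _ _ _ hk hkj (Ne.symm hlk) h).elim
      · exact (ne _ _ _ _ _ hj (Ne.symm hkj) (Ne.symm hsj) h).elim
    · rcases L2.1 (Or.inr (Or.inl trivial)) with h | h | h | h
      · exact Or.inl h.symm
      · exact Or.inr h.symm
      · exact (ne' _ _ _ _ _ hs hsj hsl h).elim
      · exact (ne _ _ _ _ _ hl hlk (Ne.symm hsl) h).elim
    · rcases L3.2 (Or.inr (Or.inr (Or.inl trivial))) with h | h | h | h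
      · exact (ne' _ _ _ _ _ hl hlj hlk h).elim
      · exact (ne _ _ _ _ _ hj (Ne.symm hlj) (Ne.symm hsj) h).elim
      · exact Or.inl h.symm
      · exact Or.inr h.symm
    · rcases L4.2 (Or.inr (Or.inr (Or.inr trivial))) with h | h | h | h
      · exact (ne' _ _ _ _ _ hs hsj hsk h).elim
      · exact (ne _ _ _ _ _ hk (Ne.symm hlk) (Ne.symm hsk) h).elim
      · exact Or.inl h.symm
      · exact Or.inr h.symm
  · intro h q _
    exact xback i i' j k l s j' k' l' s' hi hi' h q
end

section
/- Let n > m+3 ≥ 5. The stabilizer in S(n) of the ordered normal simplex ∇₁^{n-m-3} = (e_{(1,...,m-1);m,m+1,m+2,s})_{s=m+3}^n (i.e., the set of σ ∈ S(n) with σ·e_{(1,...,m-1);m,m+1,m+2,s} = e_{(1,...,m-1);m,m+1,m+2,s} for all s = m+3,...,n) equals the subgroup S({1,...,m-1}) ⊂ S(n) of permutations fixing m, m+1, ..., n pointwise. -/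
def exq (K c : ℕ) : ℕ := if c < K + 1 then c + 1 else if c = K + 1 then K + 3 else 0

noncomputable def qcurve {n : ℕ} (K : ℕ) (t : Fin n → ℂ) : Fin n → Fin (K + 2) → ℂ :=
  fun x c => t x ^ exq K c.val

theorem snoc_qcurve {n K : ℕ} (t : Fin n → ℂ) (x : Fin n) (c : Fin (K + 3)) :
    (Fin.snoc (qcurve K t x) (1 : ℂ) : Fin (K + 3) → ℂ) c = t x ^ exq K c.val := by
  refine Fin.lastCases ?_ (fun i => ?_) c
  · simp [exq]
  · simp [qcurve]

theorem sum_exq (K : ℕ) {M : Type*} [AddCommMonoid M] (f : ℕ → M) (h : f (K + 2) = 0) :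
    ∑ c : Fin (K + 3), f (exq K c.val) = ∑ i ∈ Finset.range (K + 4), f i := by
  rw [Fin.sum_univ_castSucc, Fin.sum_univ_castSucc, Finset.sum_range_succ, Finset.sum_range_succ,
    Finset.sum_range_succ', h, Finset.sum_range]
  have : ∀ i : Fin (K + 1), exq K i.val = i.val + 1 := fun i => by simp [exq]; intro h; omega
  simp [this]
  simp [exq]
  abel

theorem dA_eq_zero_iff {n K : ℕ} (t : Fin n → ℂ) (ht : Function.Injective t)
    (a : Fin (K + 3) → Fin n) (ha : Function.Injective a) :
    dA (qcurve K t) a = 0 ↔ ∑ r, t (a r) = 0 := by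
  classical
  set s : Fin (K + 3) → ℂ := fun r => t (a r) with hs
  have hsinj : Function.Injective s := ht.comp ha
  set Q : Polynomial ℂ := ∏ r, (Polynomial.X - Polynomial.C (s r)) with hQ
  have hQm : Q.Monic := Polynomial.monic_prod_of_monic _ _ (fun i _ => Polynomial.monic_X_sub_C _)
  have hQd : Q.natDegree = K + 3 := by
    rw [hQ, Polynomial.natDegree_prod_of_monic _ _ (fun i _ => Polynomial.monic_X_sub_C _)]
    simp
  have hQc : Q.coeff (K + 2) = - ∑ r, s r := by
    have := Polynomial.prod_X_sub_C_coeff_card_pred (Finset.univ : Finset (Fin (K+3))) s (by simp)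
    simpa using this
  unfold dA
  rw [← Matrix.exists_mulVec_eq_zero_iff]
  have hmv : ∀ v : Fin (K + 3) → ℂ,
      (Matrix.of (fun r c : Fin (K + 3) =>
        (Fin.snoc (qcurve K t (a r)) (1 : ℂ) : Fin (K + 3) → ℂ) c)).mulVec v = 0 ↔
      ∀ r, ∑ c : Fin (K + 3), v c * s r ^ exq K c.val = 0 := by
    intro v
    rw [funext_iff]
    refine forall_congr' fun r => ?_
    simp only [Matrix.mulVec, dotProduct, Matrix.of_apply, snoc_qcurve, Pi.zero_apply, hs]
    simp only [mul_comm]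
  constructor
  · rintro ⟨v, hv, h⟩
    rw [hmv] at h
    set P : Polynomial ℂ := ∑ c : Fin (K + 3), Polynomial.monomial (exq K c.val) (v c) with hP
    have hcoeff : ∀ c : Fin (K + 3), P.coeff (exq K c.val) = v c := by
      intro c
      rw [hP, Polynomial.finsetSum_coeff, Finset.sum_eq_single c]
      · simp
      · intro b _ hb
        rw [Polynomial.coeff_monomial, if_neg]
        intro h
        apply hb
        ext
        have := b.2
        have := c.2
        unfold exq at h
        split_ifs at h <;> omega
      · simp
    have hP0 : P ≠ 0 := by
      intro h0
      apply hv
      ext c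
      rw [← hcoeff c, h0]; simp
    have hPc : P.coeff (K + 2) = 0 := by
      rw [hP, Polynomial.finsetSum_coeff]
      refine Finset.sum_eq_zero fun c _ => ?_
      rw [Polynomial.coeff_monomial, if_neg]
      intro h
      unfold exq at h
      split_ifs at h <;> omega
    have hPd : P.natDegree ≤ K + 3 := by
      refine Polynomial.natDegree_sum_le_of_forall_le _ _ fun c _ => ?_
      refine (Polynomial.natDegree_monomial_le _).trans ?_
      unfold exq
      split_ifs <;> omega
    have hdvd : Q ∣ P := by
      refine Finset.prod_dvd_of_coprime ?_ ?_
      · intro i _ j _ hij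
        exact Polynomial.pairwise_coprime_X_sub_C hsinj hij
      · intro r _
        rw [Polynomial.dvd_iff_isRoot, Polynomial.IsRoot, hP, Polynomial.eval_finsetSum]
        simpa using h r
    obtain ⟨R, hR⟩ := hdvd
    have hR0 : R ≠ 0 := by rintro rfl; simp at hR; exact hP0 hR
    have hRd : R.natDegree = 0 := by
      have := hQm.natDegree_mul' hR0
      rw [← hR, hQd] at this
      omega
    rw [Polynomial.eq_C_of_natDegree_eq_zero hRd] at hR hR0
    rw [hR, Polynomial.coeff_mul_C, hQc] at hPc
    rcases mul_eq_zero.1 hPc with h1 | h1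
    · exact neg_eq_zero.1 h1
    · rw [h1] at hR0; simp at hR0
  · intro h
    refine ⟨fun c => Q.coeff (exq K c.val), ?_, ?_⟩
    · intro h0
      have := congrFun h0 ⟨K + 1, by omega⟩
      have h1 := hQm.coeff_natDegree
      rw [hQd] at h1
      simp [exq, h1] at this
    · rw [hmv]
      intro r
      rw [sum_exq K (fun i => Q.coeff i * s r ^ i) (by simp only [hQc]; simp [h])]
      rw [← Polynomial.eval_eq_sum_range' (by omega), hQ, Polynomial.eval_prod]
      exact Finset.prod_eq_zero (Finset.mem_univ r) (by simp)

theorem continuous_dA {n K : ℕ} (t : Fin n → ℂ) (a : Fin (K + 3) → Fin n) :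
    Continuous (fun ε : ℂ => dA (qcurve K (fun x => t x + ε)) a) := by
  unfold dA
  simp only [snoc_qcurve]
  refine Continuous.matrix_det ?_
  refine continuous_matrix fun i j => ?_
  simp only [Matrix.of_apply]
  fun_prop

open Filter Topology in
theorem eventually_genPos {n K : ℕ} (t : Fin n → ℂ) (ht : Function.Injective t) :
    ∀ᶠ ε in 𝓝[≠] (0 : ℂ), GenPos (qcurve K (fun x => t x + ε)) := by
  unfold GenPos
  rw [eventually_all]
  intro a
  by_cases ha : Function.Injective a
  swap
  · simp [ha]
  have hfin : ({-(∑ r, t (a r)) / (K + 3)} : Set ℂ).Finite := Set.finite_singleton _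
  have h1 : ∀ᶠ ε in 𝓝[≠] (0 : ℂ), ε ≠ -(∑ r, t (a r)) / (K + 3) := by
    by_cases h0 : -(∑ r, t (a r)) / ((K : ℂ) + 3) = 0
    · rw [h0]; exact eventually_mem_nhdsWithin
    · exact (eventually_ne_nhds (Ne.symm h0)).filter_mono nhdsWithin_le_nhds
  filter_upwards [h1] with ε hε _ h
  rw [dA_eq_zero_iff _ (fun x y h => ht (by simpa using h)) a ha] at h
  apply hε
  rw [Finset.sum_add_distrib] at h
  simp at h
  have : (K : ℂ) + 3 ≠ 0 := by exact_mod_cast (by omega : K + 3 ≠ 0)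
  rw [eq_div_iff this]
  linear_combination h

open Filter Topology in
theorem key {n K : ℕ} (a1 a2 a3 a4 b1 b2 b3 b4 : Fin (K + 3) → Fin n)
    (h1 : Function.Injective a1) (h2 : Function.Injective a2)
    (h3 : Function.Injective a3) (h4 : Function.Injective a4)
    (hb : Function.Injective b1)
    (h : ∀ q : Fin n → Fin (K + 2) → ℂ, GenPos q →
      dA q a1 * dA q a2 * (dA q a3 * dA q a4) = dA q b1 * dA q b2 * (dA q b3 * dA q b4)) :
    Set.range a1 = Set.range b1 ∨ Set.range a2 = Set.range b1 ∨
    Set.range a3 = Set.range b1 ∨ Set.range a4 = Set.range b1 := by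
  classical
  let S : (Fin (K + 3) → Fin n) → ℕ := fun a => ∑ r, 2 ^ (a r).val
  let t : Fin n → ℂ := fun x => (K + 3) * 2 ^ x.val - S b1
  have hK : (K : ℂ) + 3 ≠ 0 := by exact_mod_cast (by omega : K + 3 ≠ 0)
  have ht : Function.Injective t := by
    intro x y hxy
    simp only [t, sub_left_inj] at hxy
    have := mul_left_cancel₀ hK hxy
    ext
    exact Nat.pow_right_injective (le_refl 2) (by exact_mod_cast this)
  have hsum : ∀ a, Function.Injective a →
      (dA (qcurve K t) a = 0 ↔ S a = S b1) := by
    intro a ha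
    rw [dA_eq_zero_iff t ht a ha]
    simp only [t, Finset.sum_sub_distrib, ← Finset.mul_sum]
    simp only [Finset.sum_const, Finset.card_univ, Fintype.card_fin, nsmul_eq_mul]
    push_cast
    rw [← mul_sub, mul_eq_zero, or_iff_right hK, sub_eq_zero]
    exact_mod_cast Iff.rfl
  have hrange : ∀ a : Fin (K + 3) → Fin n, Function.Injective a → S a = S b1 →
      Set.range a = Set.range b1 := by
    intro a ha hS
    have e : ∀ c : Fin (K + 3) → Fin n, Function.Injective c →
        S c = ∑ i ∈ Finset.univ.image (fun r => (c r).val), 2 ^ i := by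
      intro c hc
      rw [Finset.sum_image]
      intro x _ y _ hxy
      exact hc (Fin.ext hxy)
    rw [e a ha, e b1 hb] at hS
    have h5 := Finset.geomSum_injective (le_refl 2) hS
    ext x
    have h6 := Finset.ext_iff.1 h5 x.val
    simpa [Fin.ext_iff] using h6
  have hid : dA (qcurve K t) a1 * dA (qcurve K t) a2 * (dA (qcurve K t) a3 * dA (qcurve K t) a4)
      = 0 := by
    have l := ((continuous_dA t a1).mul (continuous_dA t a2)).mul
      ((continuous_dA t a3).mul (continuous_dA t a4))
    have r := ((continuous_dA t b1).mul (continuous_dA t b2)).mul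
      ((continuous_dA t b3).mul (continuous_dA t b4))
    have hl := (l.tendsto 0).mono_left (nhdsWithin_le_nhds (s := {0}ᶜ))
    have hr := (r.tendsto 0).mono_left (nhdsWithin_le_nhds (s := {0}ᶜ))
    have he := (eventually_genPos (K := K) t ht).mono (fun ε hε => h _ hε)
    have := tendsto_nhds_unique_of_eventuallyEq hl hr he
    have t0 : (fun x => t x + 0) = t := by funext x; simp
    have this2 : dA (qcurve K (fun x => t x + 0)) a1 * dA (qcurve K (fun x => t x + 0)) a2 *
        (dA (qcurve K (fun x => t x + 0)) a3 * dA (qcurve K (fun x => t x + 0)) a4) =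
        dA (qcurve K (fun x => t x + 0)) b1 * dA (qcurve K (fun x => t x + 0)) b2 *
        (dA (qcurve K (fun x => t x + 0)) b3 * dA (qcurve K (fun x => t x + 0)) b4) := this
    rw [t0] at this2
    rw [this2, (hsum b1 hb).2 rfl]
    simp
  rcases mul_eq_zero.1 hid with h' | h' <;> rcases mul_eq_zero.1 h' with h' | h'
  · exact Or.inl (hrange _ h1 ((hsum _ h1).1 h'))
  · exact Or.inr (Or.inl (hrange _ h2 ((hsum _ h2).1 h')))
  · exact Or.inr (Or.inr (Or.inl (hrange _ h3 ((hsum _ h3).1 h'))))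
  · exact Or.inr (Or.inr (Or.inr (hrange _ h4 ((hsum _ h4).1 h'))))

def Rset {n : ℕ} (K : ℕ) (j k : Fin n) : Set (Fin n) := {x | x.val ≤ K ∨ x = j ∨ x = k}

theorem Rset_ne {n K : ℕ} {j k l t : Fin n} (hl : K < l.val) (h1 : l ≠ j) (h2 : l ≠ k) :
    Rset K j k ≠ Rset K l t := by
  intro h
  have : l ∈ Rset K j k := by rw [h]; simp [Rset]
  simp only [Rset, Set.mem_ofPred_eq, h1, h2, or_false] at this
  omega

theorem Rset_comm {n K : ℕ} (j k : Fin n) : Rset K j k = Rset K k j := by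
  ext x; simp only [Rset, Set.mem_ofPred_eq]; tauto

def Fidx {n K : ℕ} (hK : K + 1 ≤ n) (j k : Fin n) : Fin (K + 3) → Fin n :=
  Fin.snoc (Fin.snoc (fun r : Fin (K + 1) => Fin.castLE hK r) j : Fin (K + 2) → Fin n) k

theorem range_Fidx {n K : ℕ} (hK : K + 1 ≤ n) (j k : Fin n) :
    Set.range (Fidx hK j k) = Rset K j k := by
  ext x
  simp only [Set.mem_range, Rset, Set.mem_ofPred_eq]
  constructor
  · rintro ⟨r, rfl⟩
    unfold Fidx
    refine Fin.lastCases ?_ (fun r => ?_) r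
    · simp
    · refine Fin.lastCases ?_ (fun r => ?_) r
      · simp
      · left
        simp
        omega
  · rintro (h | rfl | rfl)
    · refine ⟨Fin.castSucc (Fin.castSucc ⟨x.val, by omega⟩), ?_⟩
      unfold Fidx
      rw [Fin.snoc_castSucc, Fin.snoc_castSucc]
      rfl
    · refine ⟨Fin.castSucc (Fin.last _), ?_⟩
      unfold Fidx
      rw [Fin.snoc_castSucc, Fin.snoc_last]
    · refine ⟨Fin.last _, ?_⟩
      unfold Fidx
      rw [Fin.snoc_last]

theorem Fidx_inj {n K : ℕ} (hK : K + 1 ≤ n) {j k : Fin n} (hj : K < j.val) (hk : K < k.val)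
    (hjk : j ≠ k) : Function.Injective (Fidx hK j k) := by
  unfold Fidx
  rw [Fin.snoc_injective_iff, Fin.snoc_injective_iff]
  refine ⟨⟨Fin.castLE_injective hK, ?_⟩, ?_⟩
  · rintro ⟨r, rfl⟩
    simp at hj; omega
  · rintro ⟨r, hr⟩
    revert hr
    refine Fin.lastCases ?_ (fun r => ?_) r
    · simpa using hjk
    · rw [Fin.snoc_castSucc]
      rintro rfl
      simp at hk; omega

theorem Fidx_comp {n K : ℕ} (hK : K + 1 ≤ n) (σ : Equiv.Perm (Fin n)) (j k : Fin n) :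
    (Fin.snoc (Fin.snoc (fun r : Fin (K + 1) => σ (Fin.castLE hK r)) (σ j) : Fin (K + 2) → Fin n)
      (σ k) : Fin (K + 3) → Fin n) = σ ∘ Fidx hK j k := by
  unfold Fidx
  rw [Fin.comp_snoc, Fin.comp_snoc]
  rfl

theorem pairs {n K : ℕ} (hK : K + 1 ≤ n) (σ : Equiv.Perm (Fin n)) {j k l t : Fin n}
    (hj : K < j.val) (hk : K < k.val) (hl : K < l.val) (ht : K < t.val)
    (hjk : j ≠ k) (hjl : j ≠ l) (hjt : j ≠ t) (hkl : k ≠ l) (hkt : k ≠ t) (hlt : l ≠ t)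
    (h : ∀ q : Fin n → Fin (K + 2) → ℂ, GenPos q →
        ecr q (fun r : Fin (K + 1) => σ (Fin.castLE hK r)) (σ j) (σ k) (σ l) (σ t)
          = ecr q (fun r : Fin (K + 1) => Fin.castLE hK r) j k l t) :
    (σ '' Rset K j k = Rset K j k ∨ σ '' Rset K l t = Rset K j k) ∧
    (σ '' Rset K j k = Rset K l t ∨ σ '' Rset K l t = Rset K l t) ∧
    (σ '' Rset K j l = Rset K j l ∨ σ '' Rset K k t = Rset K j l) ∧
    (σ '' Rset K j l = Rset K k t ∨ σ '' Rset K k t = Rset K k t) := by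
  have ijk := Fidx_inj hK hj hk hjk
  have ilt := Fidx_inj hK hl ht hlt
  have ijl := Fidx_inj hK hj hl hjl
  have ikt := Fidx_inj hK hk ht hkt
  have sjk := σ.injective.comp ijk
  have slt := σ.injective.comp ilt
  have sjl := σ.injective.comp ijl
  have skt := σ.injective.comp ikt
  have H : ∀ q : Fin n → Fin (K + 2) → ℂ, GenPos q →
      dA q (σ ∘ Fidx hK j k) * dA q (σ ∘ Fidx hK l t) * (dA q (Fidx hK j l) * dA q (Fidx hK k t))
      = dA q (Fidx hK j k) * dA q (Fidx hK l t) *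
        (dA q (σ ∘ Fidx hK j l) * dA q (σ ∘ Fidx hK k t)) := by
    intro q hq
    have := h q hq
    unfold ecr at this
    simp only [Fidx_comp] at this
    exact (div_eq_div_iff (mul_ne_zero (hq _ sjl) (hq _ skt))
      (mul_ne_zero (hq _ ijl) (hq _ ikt))).1 this
  have n1 : Rset K j l ≠ Rset K j k := by
    rw [Rset_comm j k]; exact Rset_ne hk hjk.symm hkl
  have n2 : Rset K k t ≠ Rset K j k := Rset_ne hj hjk hjt
  have n3 : Rset K j l ≠ Rset K l t := by
    rw [Rset_comm l t]; exact Rset_ne ht hjt.symm hlt.symm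
  have n4 : Rset K k t ≠ Rset K l t := Rset_ne hl hkl.symm hlt
  have c1 := key _ _ _ _ _ _ _ _ sjk slt ijl ikt ijk H
  have c2 := key _ _ _ _ _ (Fidx hK j k) (σ ∘ Fidx hK j l) (σ ∘ Fidx hK k t) sjk slt ijl ikt ilt
    (fun q hq => by linear_combination H q hq)
  have c3 := key _ _ _ _ _ (Fidx hK k t) (σ ∘ Fidx hK j k) (σ ∘ Fidx hK l t) sjl skt ijk ilt ijl
    (fun q hq => by linear_combination - H q hq)
  have c4 := key _ _ _ _ _ (Fidx hK j l) (σ ∘ Fidx hK j k) (σ ∘ Fidx hK l t) sjl skt ijk ilt ikt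
    (fun q hq => by linear_combination - H q hq)
  simp only [Set.range_comp, range_Fidx, n1, n2, n3, n4, n1.symm, n2.symm, n3.symm, n4.symm,
    or_false] at c1 c2 c3 c4
  exact ⟨c1, c2, c3, c4⟩

theorem forward {n K : ℕ} (hn : K + 6 ≤ n) (hK : K + 1 ≤ n) (σ : Equiv.Perm (Fin n))
    {j k l : Fin n} (hj : j.val = K + 1) (hk : k.val = K + 2) (hl : l.val = K + 3)
    (h : ∀ t : Fin n, K + 4 ≤ t.val → ∀ q : Fin n → Fin (K + 2) → ℂ, GenPos q →
        ecr q (fun r : Fin (K + 1) => σ (Fin.castLE hK r)) (σ j) (σ k) (σ l) (σ t)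
          = ecr q (fun r : Fin (K + 1) => Fin.castLE hK r) j k l t) :
    ∀ t : Fin n, K + 4 ≤ t.val → σ j = j ∧ σ k = k ∧ σ l = l ∧ σ t = t := by
  intro t ht
  obtain ⟨t', ht', hne⟩ : ∃ t' : Fin n, K + 4 ≤ t'.val ∧ t' ≠ t := by
    by_cases h4 : t.val = K + 4
    · exact ⟨⟨K + 5, by omega⟩, by simp, by rw [Ne, Fin.ext_iff]; simp; omega⟩
    · exact ⟨⟨K + 4, by omega⟩, by simp, by rw [Ne, Fin.ext_iff]; simp; omega⟩
  have hjk : j ≠ k := by rw [Ne, Fin.ext_iff]; omega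
  have hjl : j ≠ l := by rw [Ne, Fin.ext_iff]; omega
  have hkl : k ≠ l := by rw [Ne, Fin.ext_iff]; omega
  have hjt : ∀ t : Fin n, K + 4 ≤ t.val → j ≠ t := by intro t ht; rw [Ne, Fin.ext_iff]; omega
  have hkt : ∀ t : Fin n, K + 4 ≤ t.val → k ≠ t := by intro t ht; rw [Ne, Fin.ext_iff]; omega
  have hlt : ∀ t : Fin n, K + 4 ≤ t.val → l ≠ t := by intro t ht; rw [Ne, Fin.ext_iff]; omega
  have p := fun t (ht : K + 4 ≤ t.val) => pairs hK σ (by omega) (by omega) (by omega) (by omega)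
    hjk hjl (hjt t ht) hkl (hkt t ht) (hlt t ht) (h t ht)
  obtain ⟨a1, a2, a3, a4⟩ := p t ht
  obtain ⟨b1, b2, b3, b4⟩ := p t' ht'
  have inj := σ.injective.image_injective
  have e1 : σ '' Rset K j k = Rset K j k := by
    rcases a1 with a1 | a1
    · exact a1
    rcases b1 with b1 | b1
    · exact b1
    have := inj (a1.trans b1.symm)
    rw [Rset_comm l t'] at this
    exact absurd this (Rset_ne (by omega) (hlt t' ht').symm hne)
  have e2 : σ '' Rset K j l = Rset K j l := by
    rcases a3 with a1 | a1
    · exact a1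
    rcases b3 with b1 | b1
    · exact b1
    have := inj (a1.trans b1.symm)
    rw [Rset_comm k t'] at this
    exact absurd this (Rset_ne (by omega) (hkt t' ht').symm hne)
  have e3 : σ '' Rset K l t = Rset K l t := by
    refine a2.resolve_left ?_
    rw [e1]
    exact Rset_ne (by omega) hjl.symm hkl.symm
  have e4 : σ '' Rset K k t = Rset K k t := by
    refine a4.resolve_left ?_
    rw [e2]
    exact Rset_ne (by omega) hjk.symm hkl
  have m : ∀ S : Set (Fin n), σ '' S = S → ∀ x, (σ x ∈ S ↔ x ∈ S) := by
    intro S hS x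
    conv_lhs => rw [← hS]
    exact σ.injective.mem_set_image
  have hjt := hjt t ht
  have hkt := hkt t ht
  have hlt := hlt t ht
  have mm : ∀ x : Fin n, _ := fun x => And.intro (m _ e1 x) (And.intro (m _ e2 x)
    (And.intro (m _ e3 x) (m _ e4 x)))
  simp only [Rset, Set.mem_ofPred_eq, Fin.ext_iff] at mm
  refine ⟨?_, ?_, ?_, ?_⟩ <;> rw [Fin.ext_iff]
  · have := mm j; omega
  · have := mm k; omega
  · have := mm l; omega
  · have := mm t; omega

theorem dA_perm {n m : ℕ} (q : Fin n → Fin m → ℂ) (a : Fin (m + 1) → Fin n)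
    (τ : Equiv.Perm (Fin (m + 1))) : dA q (a ∘ τ) = (Equiv.Perm.sign τ : ℂ) * dA q a := by
  unfold dA
  rw [← Matrix.det_permute]
  rfl

theorem backward {n K : ℕ} (hK : K + 1 ≤ n) (σ : Equiv.Perm (Fin n))
    (h : ∀ a : Fin n, K + 1 ≤ a.val → σ a = a) :
    ∃ s : ℂ, s ≠ 0 ∧ ∀ (q : Fin n → Fin (K + 2) → ℂ) (j k : Fin n), K < j.val → K < k.val →
      dA q (σ ∘ Fidx hK j k) = s * dA q (Fidx hK j k) := by
  have hlt : ∀ a : Fin n, a.val < K + 1 → (σ a).val < K + 1 := by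
    intro a ha
    by_contra hc
    have := σ.injective (h (σ a) (by omega))
    rw [this] at hc
    exact hc ha
  let f : Fin (K + 3) → Fin (K + 3) := fun r =>
    if hr : r.val < K + 1 then ⟨(σ ⟨r.val, by omega⟩).val, by have := hlt ⟨r.val, by omega⟩ hr; omega⟩
    else r
  have hf : Function.Injective f := by
    intro x y hxy
    simp only [f] at hxy
    split_ifs at hxy with h1 h2 h2
    · simp only [Fin.mk.injEq] at hxy
      have := σ.injective (Fin.ext hxy)
      simp at this
      exact Fin.ext this
    · rw [Fin.ext_iff] at hxy
      have := hlt ⟨x.val, by omega⟩ h1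
      simp at hxy; omega
    · rw [Fin.ext_iff] at hxy
      have := hlt ⟨y.val, by omega⟩ h2
      simp at hxy; omega
    · exact hxy
  let τ : Equiv.Perm (Fin (K + 3)) := Equiv.ofBijective f (Finite.injective_iff_bijective.1 hf)
  refine ⟨(Equiv.Perm.sign τ : ℂ), by simp, ?_⟩
  intro q j k hj hk
  rw [← dA_perm]
  congr 1
  have hlow : ∀ r : Fin (K + 3), ∀ hr : r.val < K + 1, Fidx hK j k r = ⟨r.val, by omega⟩ := by
    intro r hr
    have : r = Fin.castSucc (Fin.castSucc ⟨r.val, hr⟩) := rfl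
    have h2 : Fidx hK j k (Fin.castSucc (Fin.castSucc ⟨r.val, hr⟩)) = ⟨r.val, by omega⟩ := by
      unfold Fidx
      rw [Fin.snoc_castSucc, Fin.snoc_castSucc]
      rfl
    exact h2
  funext r
  simp only [Function.comp]
  have hτ : τ r = f r := rfl
  rw [hτ]
  by_cases hr : r.val < K + 1
  · have := hlt ⟨r.val, by omega⟩ hr
    have hfr : f r = ⟨(σ ⟨r.val, by omega⟩).val, by omega⟩ := dif_pos hr
    rw [hfr, hlow r hr, hlow _ this]
  · have hfr : f r = r := dif_neg hr
    rw [hfr]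
    apply h
    revert hr
    unfold Fidx
    refine Fin.lastCases ?_ (fun r => ?_) r
    · intro _; rw [Fin.snoc_last]; exact hk
    · refine Fin.lastCases ?_ (fun r => ?_) r
      · intro _; rw [Fin.snoc_castSucc, Fin.snoc_last]; exact hj
      · intro hr
        exact absurd r.2 (by simpa using hr)

/-- Stabilizer of the ordered normal simplex `∇₁^{n-m-3}` of the first type.
Here the paper's `m` is `K + 2` (so `m + 3 ≥ 5`) and `n > m + 3`; indices are
0-indexed, so the paper's `(1,...,m-1; m, m+1, m+2, s)`, `s = m+3,...,n`, becomes
`(0,...,K; K+1, K+2, K+3, t)` with `K + 4 ≤ t`.  A permutation `σ` fixes every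
vertex `e_{(1,...,m-1);m,m+1,m+2,s}` (as a function on `ℰⁿ(ℂ^m, gp)`, via
`σ·e_{𝐢;j,k,r,s} = e_{σ𝐢;σj,σk,σr,σs}`) iff `σ ∈ S({1,...,m-1})`, i.e. `σ` fixes
`m, m+1, ..., n` pointwise. -/
theorem stabilizer_nabla_one {n K : ℕ} (hn : K + 6 ≤ n) (σ : Equiv.Perm (Fin n)) :
    (∀ t : Fin n, K + 4 ≤ t.val →
      ∀ q : Fin n → Fin (K + 2) → ℂ, GenPos q →
        ecr q (fun r : Fin (K + 1) => σ (Fin.castLE (by omega) r))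
            (σ ⟨K + 1, by omega⟩) (σ ⟨K + 2, by omega⟩) (σ ⟨K + 3, by omega⟩) (σ t)
          = ecr q (fun r : Fin (K + 1) => Fin.castLE (by omega) r)
            ⟨K + 1, by omega⟩ ⟨K + 2, by omega⟩ ⟨K + 3, by omega⟩ t) ↔
      (∀ a : Fin n, K + 1 ≤ a.val → σ a = a) := by
  have hK : K + 1 ≤ n := by omega
  constructor
  · intro h
    have F := forward hn hK σ rfl rfl rfl h
    intro a ha
    have F4 := F ⟨K + 4, by omega⟩ (le_refl _)
    by_cases h4 : K + 4 ≤ a.val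
    · exact (F a h4).2.2.2
    · have h5 : a = ⟨K + 1, by omega⟩ ∨ a = ⟨K + 2, by omega⟩ ∨ a = ⟨K + 3, by omega⟩ := by
        simp only [Fin.ext_iff]; omega
      rcases h5 with h5 | h5 | h5 <;> rw [h5]
      · exact F4.1
      · exact F4.2.1
      · exact F4.2.2.1
  · intro h t ht q hq
    obtain ⟨s, hs, H⟩ := backward hK σ h
    unfold ecr
    simp only [Fidx_comp hK]
    rw [H q _ _ (by simp) (by simp), H q _ _ (by simp) (by omega),
      H q _ _ (by simp) (by simp), H q _ _ (by simp) (by omega)]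
    rw [mul_mul_mul_comm s, mul_mul_mul_comm s _ s, mul_div_mul_left _ _ (mul_ne_zero hs hs)]
    rfl
end

section
/- If the ratio μ/μ' of two cross ratios μ = ((q_j−q_k)/(q_j−q_s)) : ((q_k−q_t)/(q_s−q_t)) and μ' = ((q_{j'}−q_{k'})/(q_{j'}−q_{s'})) : ((q_{k'}−q_{t'})/(q_{s'}−q_{t'})), as rational functions of the variables, is itself a cross ratio of four of the eight variables q_j,q_k,q_s,q_t,q_{j'},q_{k'},q_{s'},q_{t'}, then the index sets {j,k,s,t} and {j',k',s',t'} share exactly 3 elements. -/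
/-- The cross ratio of four variables `q_a, q_b, q_c, q_d`, as an element of the
field of rational functions `ℂ(q_1, ..., q_n)`:
`((q_a−q_b)(q_c−q_d))/((q_a−q_c)(q_b−q_d))`. -/
noncomputable def crossRatio {n : ℕ} (a b c d : Fin n) :
    FractionRing (MvPolynomial (Fin n) ℂ) :=
  let x : Fin n → FractionRing (MvPolynomial (Fin n) ℂ) := fun i =>
    algebraMap (MvPolynomial (Fin n) ℂ) _ (MvPolynomial.X i)
  ((x a - x b) * (x c - x d)) / ((x a - x c) * (x b - x d))

/-- cleared-denominator identity, evaluated at a point -/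
lemma rcr_eval {n : ℕ} (j k s t j' k' s' t' a b c d : Fin n)
    (h1 : Function.Injective ![j, k, s, t])
    (h2 : Function.Injective ![j', k', s', t'])
    (h3 : Function.Injective ![a, b, c, d])
    (h : crossRatio j k s t / crossRatio j' k' s' t' = crossRatio a b c d) (q : Fin n → ℂ) :
    (q j - q k) * (q s - q t) * ((q j' - q s') * (q k' - q t')) * ((q a - q c) * (q b - q d)) =
    (q j - q s) * (q k - q t) * ((q j' - q k') * (q s' - q t')) * ((q a - q b) * (q c - q d)) := by
  have hne : ∀ u v : Fin n, u ≠ v →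
      (algebraMap (MvPolynomial (Fin n) ℂ) (FractionRing (MvPolynomial (Fin n) ℂ))
        (MvPolynomial.X u) - algebraMap (MvPolynomial (Fin n) ℂ) _ (MvPolynomial.X v)) ≠ 0 := by
    intro u v huv h0
    rw [sub_eq_zero] at h0
    exact huv (MvPolynomial.X_injective (IsFractionRing.injective _ _ h0))
  have e : ∀ {x y z w : Fin n}, Function.Injective ![x, y, z, w] →
      x ≠ y ∧ x ≠ z ∧ y ≠ w ∧ z ≠ w := by
    intro x y z w hi
    refine ⟨fun h => ?_, fun h => ?_, fun h => ?_, fun h => ?_⟩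
    · exact absurd (@hi 0 1 h) (by decide)
    · exact absurd (@hi 0 2 h) (by decide)
    · exact absurd (@hi 1 3 h) (by decide)
    · exact absurd (@hi 2 3 h) (by decide)
  obtain ⟨p1, p2, p3, p4⟩ := e h1
  obtain ⟨p5, p6, p7, p8⟩ := e h2
  obtain ⟨p9, p10, p11, p12⟩ := e h3
  simp only [crossRatio] at h
  have a1 := hne _ _ p1
  have a2 := hne _ _ p2
  have a3 := hne _ _ p3
  have a4 := hne _ _ p4
  have a5 := hne _ _ p5
  have a6 := hne _ _ p6
  have a7 := hne _ _ p7
  have a8 := hne _ _ p8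
  have a9 := hne _ _ p9
  have a10 := hne _ _ p10
  have a11 := hne _ _ p11
  have a12 := hne _ _ p12
  rw [div_div_div_eq, div_eq_div_iff (by simp [*]) (by simp [*])] at h
  simp only [← map_sub, ← map_mul] at h
  have h' := congrArg (MvPolynomial.eval q) (IsFractionRing.injective _ _ h)
  simp only [map_mul, map_sub, MvPolynomial.eval_X] at h'
  linear_combination h'

lemma rcr_inj {n : ℕ} {x y z w : Fin n} (hi : Function.Injective ![x, y, z, w]) :
    x ≠ y ∧ x ≠ z ∧ x ≠ w ∧ y ≠ z ∧ y ≠ w ∧ z ≠ w := by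
  refine ⟨fun h => ?_, fun h => ?_, fun h => ?_, fun h => ?_, fun h => ?_, fun h => ?_⟩
  · exact absurd (@hi 0 1 h) (by decide)
  · exact absurd (@hi 0 2 h) (by decide)
  · exact absurd (@hi 0 3 h) (by decide)
  · exact absurd (@hi 1 2 h) (by decide)
  · exact absurd (@hi 1 3 h) (by decide)
  · exact absurd (@hi 2 3 h) (by decide)

lemma rcr_sep {n : ℕ} (u v : Fin n) : ∃ q : Fin n → ℂ, q u = q v ∧
    ∀ x y, q x - q y = 0 → x = y ∨ (x = u ∧ y = v) ∨ (x = v ∧ y = u) := by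
  refine ⟨fun i => if i = v then (u.val : ℂ) else (i.val : ℂ), ?_, ?_⟩
  · simp
  · intro x y h
    rw [sub_eq_zero] at h
    have hc : ∀ p r : Fin n, (p.val : ℂ) = (r.val : ℂ) → p = r := by
      intro p r h; exact Fin.ext (by exact_mod_cast h)
    dsimp only at h
    split_ifs at h with h1 h2 h2
    · left; rw [h1, h2]
    · have := hc _ _ h; right; right; exact ⟨h1, this.symm⟩
    · have := hc _ _ h; right; left; exact ⟨this, h2⟩
    · left; exact hc _ _ h

/-- six-edge identity -/
def RcrId {n : ℕ} (j k s t j' k' s' t' a b c d : Fin n) : Prop :=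
  ∀ q : Fin n → ℂ,
    (q j - q k) * (q s - q t) * ((q j' - q s') * (q k' - q t')) * ((q a - q c) * (q b - q d)) =
    (q j - q s) * (q k - q t) * ((q j' - q k') * (q s' - q t')) * ((q a - q b) * (q c - q d))

lemma rcr_one {n : ℕ} {j k s t j' k' s' t' a b c d : Fin n}
    (h1 : Function.Injective ![j, k, s, t])
    (h2 : Function.Injective ![j', k', s', t'])
    (h3 : Function.Injective ![a, b, c, d])
    (H : RcrId j k s t j' k' s' t' a b c d)
    (hj : j ∉ ({j', k', s', t'} : Finset (Fin n))) :
    j ∈ ({a, b, c, d} : Finset (Fin n)) ∧ k ∈ ({a, b, c, d} : Finset (Fin n)) ∧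
      s ∈ ({a, b, c, d} : Finset (Fin n)) := by
  have e1 := rcr_inj h1
  have e2 := rcr_inj h2
  have e3 := rcr_inj h3
  simp only [Finset.mem_insert, Finset.mem_singleton, not_or] at hj ⊢
  have A : (j = a ∧ k = b ∨ j = b ∧ k = a) ∨ (j = c ∧ k = d ∨ j = d ∧ k = c) := by
    obtain ⟨q, hq, hs⟩ := rcr_sep j k
    have := H q
    rw [hq, sub_self] at this
    simp only [zero_mul] at this
    have := this.symm
    simp only [mul_eq_zero] at this
    rw [← hq] at this
    rcases this with ((h | h) | (h | h)) | (h | h) <;> have := hs _ _ h <;> grind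
  have B : (j = a ∧ s = c ∨ j = c ∧ s = a) ∨ (j = b ∧ s = d ∨ j = d ∧ s = b) := by
    obtain ⟨q, hq, hs⟩ := rcr_sep j s
    have := H q
    rw [hq, sub_self] at this
    simp only [zero_mul] at this
    simp only [mul_eq_zero] at this
    rw [← hq] at this
    rcases this with ((h | h) | (h | h)) | (h | h) <;> have := hs _ _ h <;> grind
  grind

lemma rcr_sub {n : ℕ} {j k s t j' k' s' t' a b c d : Fin n}
    (h1 : Function.Injective ![j, k, s, t])
    (h2 : Function.Injective ![j', k', s', t'])
    (h3 : Function.Injective ![a, b, c, d])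
    (H : RcrId j k s t j' k' s' t' a b c d)
    (hc : 1 < (({j, k, s, t} : Finset (Fin n)) \ {j', k', s', t'}).card) :
    ({j, k, s, t} : Finset (Fin n)) ⊆ {a, b, c, d} := by
  have mk : ∀ {x y z w : Fin n}, x ≠ y ∧ x ≠ z ∧ x ≠ w ∧ y ≠ z ∧ y ≠ w ∧ z ≠ w →
      Function.Injective ![x, y, z, w] := by
    intro x y z w h
    intro i i' hi
    fin_cases i <;> fin_cases i' <;> simp_all
  have e1 := rcr_inj h1
  have J := rcr_one h1 h2 h3 H
  have K := @rcr_one n k j t s j' k' s' t' a b c d (mk (by grind)) h2 h3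
    (fun q => by linear_combination H q)
  have S := @rcr_one n s t j k j' k' s' t' a b c d (mk (by grind)) h2 h3
    (fun q => by linear_combination H q)
  have T := @rcr_one n t s k j j' k' s' t' a b c d (mk (by grind)) h2 h3
    (fun q => by linear_combination H q)
  obtain ⟨x, hx, y, hy, hxy⟩ := Finset.one_lt_card.mp hc
  rw [Finset.mem_sdiff] at hx hy
  obtain ⟨hx, hx'⟩ := hx
  obtain ⟨hy, hy'⟩ := hy
  generalize ({j', k', s', t'} : Finset (Fin n)) = JJ at *
  generalize ({a, b, c, d} : Finset (Fin n)) = DD at *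
  simp only [Finset.mem_insert, Finset.mem_singleton] at hx hy
  simp only [Finset.insert_subset_iff, Finset.singleton_subset_iff]
  rcases hx with rfl | rfl | rfl | rfl <;> rcases hy with rfl | rfl | rfl | rfl <;> tauto

lemma rcr_val (x y z w : ℂ) (hx : x = 0 ∨ x = 3 ∨ x = 2 ∨ x = 4)
    (hy : y = 0 ∨ y = 3 ∨ y = 2 ∨ y = 4) (hz : z = 0 ∨ z = 3 ∨ z = 2 ∨ z = 4)
    (hw : w = 0 ∨ w = 3 ∨ w = 2 ∨ w = 4)
    (h : x ≠ y ∧ x ≠ z ∧ x ≠ w ∧ y ≠ z ∧ y ≠ w ∧ z ≠ w) :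
    ∃ r : ℂ, (r = 3 ∨ r = 1/3 ∨ r = -2 ∨ r = -1/2 ∨ r = 3/2 ∨ r = 2/3) ∧
      (x - y) * (z - w) = r * ((x - z) * (y - w)) := by
  obtain ⟨n1, n2, n3, n4, n5, n6⟩ := h
  refine ⟨(x - y) * (z - w) / ((x - z) * (y - w)), ?_, ?_⟩
  · rcases hx with rfl | rfl | rfl | rfl <;> rcases hy with rfl | rfl | rfl | rfl <;>
    first
    | exact absurd rfl n1
    | (rcases hz with rfl | rfl | rfl | rfl <;>
       first
       | exact absurd rfl n2
       | exact absurd rfl n4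
       | (rcases hw with rfl | rfl | rfl | rfl <;>
          first
          | exact absurd rfl n3
          | exact absurd rfl n5
          | exact absurd rfl n6
          | norm_num))
  · have := sub_ne_zero.mpr n2
    have := sub_ne_zero.mpr n5
    field_simp

lemma rcr_same {n : ℕ} {j k s t j' k' s' t' a b c d : Fin n}
    (h1 : Function.Injective ![j, k, s, t])
    (h2 : Function.Injective ![j', k', s', t'])
    (h3 : Function.Injective ![a, b, c, d])
    (H : RcrId j k s t j' k' s' t' a b c d)
    (hI : ({j, k, s, t} : Finset (Fin n)) ⊆ {a, b, c, d})
    (hJ : ({j', k', s', t'} : Finset (Fin n)) ⊆ {a, b, c, d}) : False := by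
  have e1 := rcr_inj h1
  have e2 := rcr_inj h2
  have e3 := rcr_inj h3
  obtain ⟨q, qa, qb, qc, qd⟩ : ∃ q : Fin n → ℂ, q a = 0 ∧ q b = 3 ∧ q c = 2 ∧ q d = 4 := by
    refine ⟨fun i => if i = a then 0 else if i = b then 3 else if i = c then 2 else 4,
      ?_, ?_, ?_, ?_⟩ <;> grind
  have hv : ∀ x ∈ ({a, b, c, d} : Finset (Fin n)), q x = 0 ∨ q x = 3 ∨ q x = 2 ∨ q x = 4 := by
    intro x hx
    simp only [Finset.mem_insert, Finset.mem_singleton] at hx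
    rcases hx with rfl | rfl | rfl | rfl <;> simp [*]
  have hinj : ∀ x ∈ ({a, b, c, d} : Finset (Fin n)), ∀ y ∈ ({a, b, c, d} : Finset (Fin n)),
      x ≠ y → q x ≠ q y := by
    intro x hx y hy hxy
    simp only [Finset.mem_insert, Finset.mem_singleton] at hx hy
    rcases hx with rfl | rfl | rfl | rfl <;> rcases hy with rfl | rfl | rfl | rfl <;>
      first
      | exact absurd rfl hxy
      | (simp only [qa, qb, qc, qd]; norm_num)
  have key : ∀ x y z w : Fin n, (x ≠ y ∧ x ≠ z ∧ x ≠ w ∧ y ≠ z ∧ y ≠ w ∧ z ≠ w) →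
      ({x, y, z, w} : Finset (Fin n)) ⊆ {a, b, c, d} →
      (∃ r : ℂ, (r = 3 ∨ r = 1/3 ∨ r = -2 ∨ r = -1/2 ∨ r = 3/2 ∨ r = 2/3) ∧
      (q x - q y) * (q z - q w) = r * ((q x - q z) * (q y - q w))) ∧
      (q x - q z) * (q y - q w) ≠ 0 := by
    intro x y z w hd hs
    simp only [Finset.insert_subset_iff, Finset.singleton_subset_iff] at hs
    obtain ⟨m1, m2, m3, m4⟩ := hs
    obtain ⟨n1, n2, n3, n4, n5, n6⟩ := hd
    refine ⟨rcr_val _ _ _ _ (hv _ m1) (hv _ m2) (hv _ m3) (hv _ m4)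
      ⟨hinj _ m1 _ m2 n1, hinj _ m1 _ m3 n2, hinj _ m1 _ m4 n3, hinj _ m2 _ m3 n4,
        hinj _ m2 _ m4 n5, hinj _ m3 _ m4 n6⟩, ?_⟩
    exact mul_ne_zero (sub_ne_zero.mpr (hinj _ m1 _ m3 n2)) (sub_ne_zero.mpr (hinj _ m2 _ m4 n5))
  obtain ⟨⟨r, hr, er⟩, nr⟩ := key _ _ _ _ e1 hI
  obtain ⟨⟨r', hr', er'⟩, nr'⟩ := key _ _ _ _ e2 hJ
  have h := H q
  rw [er, er', qa, qb, qc, qd] at h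
  have h' : r = r' * 3 := by
    have := mul_ne_zero nr nr'
    apply mul_right_cancel₀ this
    linear_combination h / 2
  rcases hr with rfl | rfl | rfl | rfl | rfl | rfl <;>
    rcases hr' with rfl | rfl | rfl | rfl | rfl | rfl <;> norm_num at h'

/-- If the ratio `μ/μ'` of two cross ratios `μ = cr(q_j,q_k,q_s,q_t)` and
`μ' = cr(q_{j'},q_{k'},q_{s'},q_{t'})` is itself a cross ratio of four of the
eight variables, then the index sets `{j,k,s,t}` and `{j',k',s',t'}` share exactly
three elements. -/
theorem ratio_of_cross_ratios {n : ℕ} (j k s t j' k' s' t' : Fin n)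
    (h1 : Function.Injective ![j, k, s, t])
    (h2 : Function.Injective ![j', k', s', t'])
    (hcr : ∃ a b c d : Fin n, Function.Injective ![a, b, c, d] ∧
      ({a, b, c, d} : Set (Fin n)) ⊆ ({j, k, s, t, j', k', s', t'} : Set (Fin n)) ∧
      crossRatio j k s t / crossRatio j' k' s' t' = crossRatio a b c d) :
    (({j, k, s, t} : Finset (Fin n)) ∩ ({j', k', s', t'} : Finset (Fin n))).card = 3 := by
  obtain ⟨a, b, c, d, h3, hsub, he⟩ := hcr
  have H : RcrId j k s t j' k' s' t' a b c d := rcr_eval _ _ _ _ _ _ _ _ _ _ _ _ h1 h2 h3 he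
  have mk : ∀ {x y z w : Fin n}, x ≠ y ∧ x ≠ z ∧ x ≠ w ∧ y ≠ z ∧ y ≠ w ∧ z ≠ w →
      Function.Injective ![x, y, z, w] := by
    intro x y z w h
    intro i i' hi
    fin_cases i <;> fin_cases i' <;> simp_all
  have card4 : ∀ {x y z w : Fin n}, Function.Injective ![x, y, z, w] →
      ({x, y, z, w} : Finset (Fin n)).card = 4 := by
    intro x y z w h
    have := rcr_inj h
    rw [Finset.card_eq_succ]
    refine ⟨x, {y, z, w}, ?_, rfl, ?_⟩
    · simp; tauto
    · rw [Finset.card_eq_three]; exact ⟨y, z, w, by tauto, by tauto, by tauto, rfl⟩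
  have sI := @rcr_sub _ _ _ _ _ _ _ _ _ _ _ _ _ h1 h2 h3 H
  have hsw : ∀ x y z w : Fin n, ({x, z, y, w} : Finset (Fin n)) = {x, y, z, w} := by
    intro x y z w; ext; simp; tauto
  have sJ := @rcr_sub n j' s' k' t' j s k t a b c d
    (mk (by have := rcr_inj h2; grind)) (mk (by have := rcr_inj h1; grind)) h3
    (fun q => by linear_combination H q)
  rw [hsw j' k', hsw j k] at sJ
  have same := rcr_same h1 h2 h3 H
  have hsub' : ({a, b, c, d} : Finset (Fin n)) ⊆ {j, k, s, t} ∪ {j', k', s', t'} := by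
    intro x hx
    have : x ∈ ({a, b, c, d} : Set (Fin n)) := by simpa using hx
    have := hsub this
    simp at this ⊢
    tauto
  have cI := card4 h1
  have cJ := card4 h2
  have cD := card4 h3
  generalize ({j, k, s, t} : Finset (Fin n)) = I at *
  generalize ({j', k', s', t'} : Finset (Fin n)) = J at *
  generalize ({a, b, c, d} : Finset (Fin n)) = D at *
  have k1 := Finset.card_sdiff_add_card_inter I J
  have k2 := Finset.card_sdiff_add_card_inter J I
  rw [Finset.inter_comm] at k2
  have k3 : (I ∩ J).card ≠ 4 := by
    intro h4
    have i1 : I ∩ J = I := Finset.eq_of_subset_of_card_le Finset.inter_subset_left (by omega)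
    have i2 : I ∩ J = J := Finset.eq_of_subset_of_card_le Finset.inter_subset_right (by omega)
    have i3 : I = J := i1.symm.trans i2
    subst i3
    rw [Finset.union_self] at hsub'
    have := Finset.eq_of_subset_of_card_le hsub' (by omega)
    exact same this.ge this.ge
  by_contra hne
  exact same (sI (by omega)) (sJ (by omega))
end
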